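/- arXiv:2407.16262 — 3 statements merged into one kernel-verified Lean document; each statement's English description precedes it below -/
import Mathlib

section
/- (Ergodicity of the orthogonal skew product.) Let h_1,...,h_n ∈ O(ℝ^d) and let G be the closure of the subgroup they generate, with normalized Haar measure λ_G. Let p = (p_1,...,p_n) be a strictly positive probability vector, let 𝒜 = {1,...,n}, let p^ℕ be the Bernoulli measure on 𝒜^ℕ, and let σ be the left shift. Then the skew product F : 𝒜^ℕ × G → 𝒜^ℕ × G defined by F(ω, g) = (σω, h_{ω₁}·g) preserves the measure p^ℕ × λ_G, and the measure-preserving system (𝒜^ℕ × G, F, p^ℕ × λ_G) is ergodic. -/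
open MeasureTheory Metric Set Filter
open scoped ENNReal Topology

/-- Borel measurable structure on a subgroup of the orthogonal group. -/
noncomputable instance {d : ℕ} (G : Subgroup (Matrix.orthogonalGroup (Fin d) ℝ)) :
    MeasurableSpace G := borel G

/-!
Write `Q = ρ^ℕ × η` for the product measure and `F (ω, y) = (σ ω, h (ω 0) • y)`. The map
`Φ (ω, y) = (ω 0, F (ω, y))` carries `Q` to `ρ × Q`. Let `A` be `F`-invariant and `φ y` the
`ρ^ℕ`-measure of its section over `y`. Then `φ` is harmonic, `φ y = ∫ φ (h x • y) dρ x`, so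
`‖φ (h x • y) - φ y‖² = 2 ‖φ‖² - 2 ⟨φ (h x • y), φ y⟩ = 0` in `L² (ρ × η)`. Hence `φ` is invariant
under `h x` for almost every `x`, so its level sets are invariant under a dense subgroup of `G`, and
`φ` is almost everywhere a constant `c`.

A finite measure `ν` with `Φ_* ν = ρ × ν` is determined by its `Y`-marginal, because `y` and the
first `n + 1` letters of `ω` can be recovered from `ω 0`, `h (ω 0) • y` and the first `n` letters
of `σ ω`. Both `Q` restricted to `A` and `c Q` satisfy this identity and have marginal `c η`, so
they agree; evaluating on the complement of `A` shows that `A` or its complement is null.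
-/

section Sequences

variable {X Y : Type*} [MeasurableSpace X] [MeasurableSpace Y]

/-- The word formed by the first `n` letters of a sequence. -/
def initialWord (n : ℕ) (ω : ℕ → X) : Fin n → X := fun i => ω i

/-- The first letter of a sequence together with its left shift. -/
def headTail (ω : ℕ → X) : X × (ℕ → X) := (ω 0, fun j => ω (j + 1))

@[fun_prop]
lemma measurable_initialWord (n : ℕ) : Measurable (initialWord n : (ℕ → X) → _) := by
  unfold initialWord
  fun_prop

@[fun_prop]
lemma measurable_headTail : Measurable (headTail : (ℕ → X) → _) := by
  unfold headTail
  fun_prop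

lemma ext_of_map_initialWord {μ ν : Measure (ℕ → X)} [IsFiniteMeasure ν]
    (hμν : ∀ n, μ.map (initialWord n) = ν.map (initialWord n)) : μ = ν := by
  have hfamily : IsProjectiveMeasureFamily fun I : Finset ℕ => ν.map I.restrict :=
    ProbabilityTheory.isProjectiveMeasureFamily_map_restrict fun t =>
      (measurable_pi_apply t).aemeasurable
  refine IsProjectiveLimit.unique ((isProjectiveLimit_nat_iff hfamily μ).2 fun n => ?_)
    fun _ => rfl
  let toIic (w : Fin (n + 1) → X) : Finset.Iic n → X :=
    fun i => w ⟨i, Nat.lt_succ_of_le (Finset.mem_Iic.1 i.2)⟩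
  have htoIic : Measurable toIic := by fun_prop
  calc μ.map (Preorder.frestrictLe n) = (μ.map (initialWord (n + 1))).map toIic :=
        (Measure.map_map htoIic (measurable_initialWord _)).symm
    _ = (ν.map (initialWord (n + 1))).map toIic := by rw [hμν]
    _ = ν.map (Finset.Iic n).restrict := Measure.map_map htoIic (measurable_initialWord _)

lemma ext_of_map_prodMap_initialWord {μ ν : Measure ((ℕ → X) × Y)} [IsFiniteMeasure μ]
    [IsFiniteMeasure ν]
    (hμν : ∀ n, μ.map (Prod.map (initialWord n) id) = ν.map (Prod.map (initialWord n) id)) :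
    μ = ν := by
  refine Measure.ext_prod fun {C B} hC hB => ?_
  have hslice (κ : Measure ((ℕ → X) × Y)) {Z : Type _} [MeasurableSpace Z] {f : (ℕ → X) → Z}
      (hf : Measurable f) {S : Set Z} (hS : MeasurableSet S) :
      ((κ.restrict (univ ×ˢ B)).map Prod.fst).map f S = κ.map (Prod.map f id) (S ×ˢ B) := by
    rw [Measure.map_map hf measurable_fst, Measure.map_apply (by fun_prop) hS,
      Measure.restrict_apply (by measurability), Measure.map_apply (by fun_prop) (hS.prod hB)]
    congr 1
    ext z
    simp
  have hfst : (μ.restrict (univ ×ˢ B)).map Prod.fst = (ν.restrict (univ ×ˢ B)).map Prod.fst := by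
    refine ext_of_map_initialWord fun n => ?_
    ext S hS
    rw [hslice μ (by fun_prop) hS, hslice ν (by fun_prop) hS, hμν]
  have hbox := hslice μ measurable_id hC
  rw [hfst, hslice ν measurable_id hC] at hbox
  simpa using hbox.symm

variable (ρ : Measure X) [IsProbabilityMeasure ρ]

/-- The Bernoulli measure `ρ^ℕ`, the law of a sequence of independent letters with common
distribution `ρ`. -/
noncomputable abbrev bernoulliMeasure : Measure (ℕ → X) := Measure.infinitePi fun _ => ρ

lemma measurePreserving_initialWord (n : ℕ) :
    MeasurePreserving (initialWord n) (bernoulliMeasure ρ) (Measure.pi fun _ : Fin n => ρ) := by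
  refine ⟨measurable_initialWord n, (Measure.pi_eq fun t ht => ?_).symm⟩
  let box (j : ℕ) : Set X := if hj : j < n then t ⟨j, hj⟩ else univ
  have hbox (i : Fin n) : box i = t i := dif_pos i.2
  have hpre : initialWord n ⁻¹' univ.pi t = (Finset.range n : Set ℕ).pi box := by
    ext ω
    simp only [Set.mem_pi, mem_preimage, mem_univ, forall_const, Finset.coe_range, mem_Iio,
      Fin.forall_iff]
    exact forall₂_congr fun j hj => by rw [← hbox ⟨j, hj⟩]; rfl
  rw [Measure.map_apply (measurable_initialWord n) (.univ_pi ht), hpre,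
    Measure.infinitePi_pi _ fun j hj => ?_, Finset.prod_range]
  · simp_rw [hbox]
  · rw [← Fin.val_mk (Finset.mem_range.1 hj), hbox]
    exact ht _

lemma measurePreserving_headTail :
    MeasurePreserving headTail (bernoulliMeasure ρ) (ρ.prod (bernoulliMeasure ρ)) := by
  have hswap : MeasurePreserving (Prod.swap ∘ headTail) (bernoulliMeasure ρ)
      ((bernoulliMeasure ρ).prod ρ) := by
    refine ⟨by fun_prop, ext_of_map_prodMap_initialWord fun n => ?_⟩
    have hword := Measure.measurePreserving_swap.comp
      ((measurePreserving_piFinSuccAbove (fun _ => ρ) 0).comp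
        (measurePreserving_initialWord ρ (n + 1)))
    have hprod := (measurePreserving_initialWord ρ n).prod (MeasurePreserving.id ρ)
    rw [Measure.map_map (by fun_prop) (by fun_prop)]
    exact hword.map_eq.trans hprod.map_eq.symm
  exact Measure.measurePreserving_swap.comp hswap

lemma eq_bernoulliMeasure_of_cylinder [Countable X] [MeasurableSingletonClass X]
    {μ : Measure (ℕ → X)}
    (hμ : ∀ (m : ℕ) (w : Fin m → X), μ {ω | ∀ i : Fin m, ω i = w i} = ∏ i, ρ {w i}) :
    μ = bernoulliMeasure ρ := by
  refine ext_of_map_initialWord fun n => ?_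
  rw [(measurePreserving_initialWord ρ n).map_eq]
  refine Measure.ext_of_singleton fun w => ?_
  rw [Measure.map_apply (measurable_initialWord n) (measurableSet_singleton w),
    Measure.pi_singleton, ← hμ]
  congr 1
  ext ω
  exact funext_iff

end Sequences

section Harmonic

variable {X Y : Type*} [MeasurableSpace X] [MeasurableSpace Y]
  {ρ : Measure X} [IsProbabilityMeasure ρ] {η : Measure Y} [IsProbabilityMeasure η]

lemma ae_eq_comp_of_eq_integral {T : X × Y → Y} (hT : MeasurePreserving T (ρ.prod η) η)
    {φ : Y → ℝ} (hφ : MemLp φ 2 η) (hharm : ∀ᵐ y ∂η, φ y = ∫ x, φ (T (x, y)) ∂ρ) :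
    φ ∘ T =ᵐ[ρ.prod η] φ ∘ Prod.snd := by
  have hsnd : MeasurePreserving Prod.snd (ρ.prod η) η := measurePreserving_snd
  have hφT := hφ.comp_measurePreserving hT
  have hφsnd := hφ.comp_measurePreserving hsnd
  have hsq {S : X × Y → Y} (hS : MeasurePreserving S (ρ.prod η) η) :
      ∫ z, (φ ∘ S) z ^ 2 ∂ρ.prod η = ∫ y, φ y ^ 2 ∂η := by
    have hint := integral_map (f := fun y => φ y ^ 2) hS.aemeasurable (by
      rw [hS.map_eq]
      exact hφ.1.pow 2)
    rw [hS.map_eq] at hint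
    exact hint.symm
  have hcross : ∫ z, (φ ∘ T) z * (φ ∘ Prod.snd) z ∂ρ.prod η = ∫ y, φ y ^ 2 ∂η := by
    rw [integral_prod_symm _ (by exact hφT.integrable_mul hφsnd)]
    refine integral_congr_ae ?_
    filter_upwards [hharm] with y hy
    simp only [Function.comp_apply]
    rw [integral_mul_const, ← hy, sq]
  have hdefect : ∫ z, ((φ ∘ T) z - (φ ∘ Prod.snd) z) ^ 2 ∂ρ.prod η = 0 := by
    simp_rw [sub_sq, mul_assoc]
    rw [integral_add (by exact hφT.integrable_sq.sub ((hφT.integrable_mul hφsnd).const_mul 2))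
        hφsnd.integrable_sq,
      integral_sub hφT.integrable_sq (by exact (hφT.integrable_mul hφsnd).const_mul 2),
      integral_const_mul, hsq hT, hsq hsnd, hcross]
    ring
  rw [integral_eq_zero_iff_of_nonneg (fun z => sq_nonneg _)
    (by exact (hφT.sub hφsnd).integrable_sq)] at hdefect
  filter_upwards [hdefect] with z hz
  exact sub_eq_zero.1 (pow_eq_zero_iff two_ne_zero |>.1 hz)

end Harmonic

section Invariant

variable {X G Y : Type*} [MeasurableSpace X] {ρ : Measure X} [Group G] [TopologicalSpace G]
  [IsTopologicalGroup G] [TopologicalSpace Y] [R1Space Y] [MeasurableSpace Y] [BorelSpace Y]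
  [MulAction G Y] [ContinuousSMul G Y] {η : Measure Y} [IsProbabilityMeasure η] [η.InnerRegular]
  [ErgodicSMul G Y η]

lemma exists_ae_eq_const_of_ae_comp_smul {h : X → G} {φ : Y → ℝ} (hφ : Measurable φ)
    (hgen : ∀ H : Subgroup G, IsClosed (H : Set G) → (∀ᵐ x ∂ρ, h x ∈ H) → H = ⊤)
    (hinv : ∀ᵐ x ∂ρ, ∀ᵐ y ∂η, φ (h x • y) = φ y) :
    ∃ c, φ =ᵐ[η] Function.const Y c := by
  refine exists_eventuallyEq_const_of_forall_separating MeasurableSet fun U hU => ?_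
  let H := MulAction.aestabilizer G η (φ ⁻¹' U)
  have hH : ∀ᵐ x ∂ρ, h x ∈ H.topologicalClosure := by
    filter_upwards [hinv] with x hx
    refine H.le_topologicalClosure (inv_mem_iff.1 ?_)
    rw [MulAction.mem_aestabilizer, ← preimage_smul]
    filter_upwards [hx] with y hy
    exact congrArg (· ∈ U) hy
  have hdense : Dense (H : Set G) := by
    rw [dense_iff_closure_eq, ← H.topologicalClosure_coe,
      hgen _ H.isClosed_topologicalClosure hH, Subgroup.coe_top]
  exact eventuallyConst_set.1
    (aeconst_of_dense_aestabilizer_smul (hφ hU).nullMeasurableSet hdense)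

end Invariant

lemma map_snd_restrict_eq_smul {Z Y : Type*} [MeasurableSpace Z] [MeasurableSpace Y]
    {μ : Measure Z} [SFinite μ] {η : Measure Y} [SFinite η] {A : Set (Z × Y)}
    (hA : MeasurableSet A) {c : NNReal} (hc : ∀ᵐ y ∂η, μ {z | (z, y) ∈ A} = c) :
    ((μ.prod η).restrict A).map Prod.snd = c • η := by
  ext B hB
  rw [Measure.map_apply measurable_snd hB, Measure.restrict_apply (measurable_snd hB),
    Measure.prod_apply_symm ((measurable_snd hB).inter hA)]
  calc ∫⁻ y, μ {z | y ∈ B ∧ (z, y) ∈ A} ∂η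
      = ∫⁻ y, B.indicator (fun _ => (c : ℝ≥0∞)) y ∂η := lintegral_congr_ae <| by
        filter_upwards [hc] with y hy
        by_cases hyB : y ∈ B <;> simp [hyB, hy]
    _ = (c • η) B := lintegral_indicator_const hB _

section SkewProduct

variable {X G Y : Type*} [MeasurableSpace X] [Group G] [MeasurableSpace G]
  [MeasurableSpace Y] [MulAction G Y] {ρ : Measure X} [IsProbabilityMeasure ρ]
  {η : Measure Y} {h : X → G}

/-- The skew product over the one-sided shift on `X ^ ℕ` whose fibre map over `ω` is the action of
`h (ω 0)`. -/
def skewProduct (h : X → G) (z : (ℕ → X) × Y) : (ℕ → X) × Y :=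
  (fun j => z.1 (j + 1), h (z.1 0) • z.2)

section Measurable

variable [MeasurableSMul₂ G Y]

lemma measurePreserving_head_skewProduct [SFinite η] [SMulInvariantMeasure G Y η]
    (hh : Measurable h) :
    MeasurePreserving (fun z => (z.1 0, skewProduct h z))
      ((bernoulliMeasure ρ).prod η)
      (ρ.prod ((bernoulliMeasure ρ).prod η)) := by
  have hskew := (measurePreserving_headTail ρ).skew_product (μc := η) (μd := η)
    (g := fun ω y => h (ω 0) • y) (by fun_prop) (ae_of_all _ fun ω => MeasureTheory.map_smul _ _)
  exact (measurePreserving_prodAssoc _ _ _).comp hskew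

lemma eq_of_measurePreserving_head_skewProduct [MeasurableInv G] (hh : Measurable h)
    {μ ν : Measure ((ℕ → X) × Y)} [IsFiniteMeasure μ] [IsFiniteMeasure ν]
    (hμ : MeasurePreserving (fun z => (z.1 0, skewProduct h z)) μ (ρ.prod μ))
    (hν : MeasurePreserving (fun z => (z.1 0, skewProduct h z)) ν (ρ.prod ν))
    (hsnd : μ.map Prod.snd = ν.map Prod.snd) : μ = ν := by
  refine ext_of_map_prodMap_initialWord fun n => ?_
  induction n with
  | zero =>
    have hfactor : (Prod.map (initialWord 0) id : (ℕ → X) × Y → (Fin 0 → X) × Y) =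
        Prod.mk default ∘ Prod.snd := funext fun z => Prod.ext (Subsingleton.elim _ _) rfl
    rw [hfactor, ← Measure.map_map (by fun_prop) (by fun_prop), hsnd,
      Measure.map_map (by fun_prop) (by fun_prop)]
  | succ n ih =>
    let unstep (q : X × (Fin n → X) × Y) : (Fin (n + 1) → X) × Y :=
      (Fin.cons q.1 q.2.1, (h q.1)⁻¹ • q.2.2)
    have hunstep : Measurable unstep := by
      refine .prodMk (measurable_pi_lambda _ fun i => ?_) (by fun_prop)
      cases i using Fin.cases <;> simp only [Fin.cons_zero, Fin.cons_succ] <;> fun_prop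
    have hfactor : (Prod.map (initialWord (n + 1)) id : (ℕ → X) × Y → (Fin (n + 1) → X) × Y) =
        unstep ∘ Prod.map id (Prod.map (initialWord n) id) ∘
          fun z => (z.1 0, skewProduct h z) := by
      funext z
      refine Prod.ext (funext fun i => ?_) (inv_smul_smul _ _).symm
      cases i using Fin.cases <;> rfl
    have hmap {κ : Measure ((ℕ → X) × Y)} [IsFiniteMeasure κ]
        (hκ : MeasurePreserving (fun z => (z.1 0, skewProduct h z)) κ (ρ.prod κ)) :
        κ.map (Prod.map (initialWord (n + 1)) id) =
          (ρ.prod (κ.map (Prod.map (initialWord n) id))).map unstep := by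
      rw [hfactor, ← Measure.map_map hunstep (.comp (by fun_prop) hκ.measurable),
        ← Measure.map_map (by fun_prop) hκ.measurable, hκ.map_eq,
        ← Measure.map_prod_map _ _ measurable_id (by fun_prop), Measure.map_id]
    rw [hmap hμ, hmap hν, ih]

lemma measure_section_eq_lintegral (hh : Measurable h) {A : Set ((ℕ → X) × Y)}
    (hA : MeasurableSet A) (hinv : skewProduct h ⁻¹' A = A) (y : Y) :
    bernoulliMeasure ρ {ω | (ω, y) ∈ A} =
      ∫⁻ x, bernoulliMeasure ρ {ω | (ω, h x • y) ∈ A} ∂ρ := by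
  have hS : MeasurableSet {q : X × (ℕ → X) | (q.2, h q.1 • y) ∈ A} :=
    hA.preimage (by fun_prop)
  have hpre : {ω | (ω, y) ∈ A} = headTail ⁻¹' {q : X × (ℕ → X) | (q.2, h q.1 • y) ∈ A} := by
    conv_lhs => rw [← hinv]
    rfl
  rw [hpre, (measurePreserving_headTail ρ).measure_preimage hS.nullMeasurableSet,
    Measure.prod_apply hS]
  rfl

end Measurable

section Ergodic

variable [TopologicalSpace G] [IsTopologicalGroup G]
  [TopologicalSpace Y] [R1Space Y] [BorelSpace Y] [ContinuousSMul G Y] [MeasurableSMul₂ G Y]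
  [IsProbabilityMeasure η] [η.InnerRegular] [ErgodicSMul G Y η]

lemma exists_ae_measure_section_eq (hh : Measurable h)
    (hgen : ∀ H : Subgroup G, IsClosed (H : Set G) → (∀ᵐ x ∂ρ, h x ∈ H) → H = ⊤)
    {A : Set ((ℕ → X) × Y)} (hA : MeasurableSet A) (hinv : skewProduct h ⁻¹' A = A) :
    ∃ c : NNReal, ∀ᵐ y ∂η, bernoulliMeasure ρ {ω | (ω, y) ∈ A} = c := by
  let φ (y : Y) : ℝ := (bernoulliMeasure ρ).real {ω | (ω, y) ∈ A}
  have hsection : Measurable fun y => bernoulliMeasure ρ {ω | (ω, y) ∈ A} :=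
    measurable_measure_prodMk_right hA
  have hφ : Measurable φ := hsection.ennreal_toReal
  have hφ2 : MemLp φ 2 η := .of_bound hφ.aestronglyMeasurable 1 <| ae_of_all _ fun _ =>
    (abs_of_nonneg measureReal_nonneg).trans_le measureReal_le_one
  have hact : MeasurePreserving (fun q : X × Y => h q.1 • q.2) (ρ.prod η) η :=
    measurePreserving_snd.comp <| (MeasurePreserving.id ρ).skew_product
      (g := fun x y => h x • y) (by fun_prop) <| ae_of_all _ fun x =>
        (measurePreserving_smul (h x) η).map_eq
  have hharm (y : Y) : φ y = ∫ x, φ (h x • y) ∂ρ := by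
    refine (congrArg ENNReal.toReal (measure_section_eq_lintegral hh hA hinv y)).trans ?_
    exact (integral_toReal (hsection.comp (by fun_prop)).aemeasurable
      (ae_of_all _ fun _ => measure_lt_top _ _)).symm
  have hφinv : ∀ᵐ x ∂ρ, ∀ᵐ y ∂η, φ (h x • y) = φ y :=
    Measure.ae_ae_of_ae_prod (ae_eq_comp_of_eq_integral hact hφ2 (ae_of_all _ hharm))
  obtain ⟨c, hc⟩ := exists_ae_eq_const_of_ae_comp_smul hφ hgen hφinv
  refine ⟨c.toNNReal, ?_⟩
  filter_upwards [hc] with y hy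
  exact (ENNReal.ofReal_toReal (measure_ne_top _ _)).symm.trans (congrArg ENNReal.ofReal hy)

variable [MeasurableInv G]

lemma exists_restrict_eq_smul (hh : Measurable h)
    (hgen : ∀ H : Subgroup G, IsClosed (H : Set G) → (∀ᵐ x ∂ρ, h x ∈ H) → H = ⊤)
    {A : Set ((ℕ → X) × Y)} (hA : MeasurableSet A) (hinv : skewProduct h ⁻¹' A = A) :
    ∃ c : NNReal, ((bernoulliMeasure ρ).prod η).restrict A = c • (bernoulliMeasure ρ).prod η := by
  obtain ⟨c, hc⟩ := exists_ae_measure_section_eq (η := η) hh hgen hA hinv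
  have hQ := measurePreserving_head_skewProduct (ρ := ρ) (η := η) hh
  refine ⟨c, eq_of_measurePreserving_head_skewProduct (ρ := ρ) hh ?_ ?_ ?_⟩
  · have hpre : (fun z => (z.1 0, skewProduct h z)) ⁻¹' (univ ×ˢ A) = A := by
      simpa [mk_preimage_prod] using hinv
    have hrestrict := hQ.restrict_preimage (MeasurableSet.univ.prod hA)
    rwa [hpre, ← Measure.prod_restrict, Measure.restrict_univ] at hrestrict
  · rw [Measure.prod_smul_right]
    exact hQ.smul_measure _
  · rw [map_snd_restrict_eq_smul hA hc, Measure.map_smul, measurePreserving_snd.map_eq]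

theorem ergodic_skewProduct (hh : Measurable h)
    (hgen : ∀ H : Subgroup G, IsClosed (H : Set G) → (∀ᵐ x ∂ρ, h x ∈ H) → H = ⊤) :
    Ergodic (skewProduct h) ((bernoulliMeasure ρ).prod η) where
  toMeasurePreserving := measurePreserving_snd.comp (measurePreserving_head_skewProduct hh)
  aeconst_set A hA hinv := by
    obtain ⟨c, hc⟩ := exists_restrict_eq_smul (η := η) hh hgen hA hinv
    have hcompl : c • ((bernoulliMeasure ρ).prod η) Aᶜ = 0 := by
      rw [← Measure.smul_apply, ← hc, Measure.restrict_apply hA.compl, compl_inter_self,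
        measure_empty]
    rw [eventuallyConst_set']
    rcases smul_eq_zero.1 hcompl with rfl | hAc
    · exact .inl (ae_eq_empty.2 (Measure.restrict_eq_zero.1 (hc.trans (zero_smul _ _))))
    · exact .inr (ae_eq_univ.2 hAc)

end Ergodic

end SkewProduct

lemma eq_top_of_isClosed_of_forall_mem {X K : Type*} [Group K] [TopologicalSpace K] {h : X → K}
    {G : Subgroup K} (hGclosed : IsClosed (G : Set K)) (hGmem : ∀ x, h x ∈ G)
    (hGmin : ∀ H : Subgroup K, IsClosed (H : Set K) → (∀ x, h x ∈ H) → G ≤ H)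
    {H : Subgroup G} (hH : IsClosed (H : Set G)) (hHmem : ∀ x, (⟨h x, hGmem x⟩ : G) ∈ H) :
    H = ⊤ := by
  have hclosed : IsClosed (H.map G.subtype : Set K) :=
    hGclosed.isClosedEmbedding_subtypeVal.isClosedMap _ hH
  have hle : G ≤ H.map G.subtype := hGmin _ hclosed fun x => ⟨_, hHmem x, rfl⟩
  refine eq_top_iff.2 fun g _ => ?_
  obtain ⟨g', hg', hgg'⟩ := hle g.2
  rwa [← Subtype.ext hgg']

theorem stmt8_general {X K : Type*} [Countable X] [MeasurableSpace X] [MeasurableSingletonClass X]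
    [Group K] [TopologicalSpace K] [IsTopologicalGroup K] [PolishSpace K] (h : X → K)
    (G : Subgroup K) [MeasurableSpace G] [BorelSpace G] (hGclosed : IsClosed (G : Set K))
    (hGmem : ∀ x, h x ∈ G)
    (hGmin : ∀ H : Subgroup K, IsClosed (H : Set K) → (∀ x, h x ∈ H) → G ≤ H)
    (lamG : Measure G) [IsProbabilityMeasure lamG]
    (hlamGinv : ∀ g₀ : G, lamG.map (fun g => g₀ * g) = lamG)
    (p : X → ℝ) (hp : ∀ x, 0 < p x) (hpsum : HasSum p 1) (μBer : Measure (ℕ → X))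
    (hcyl : ∀ (m : ℕ) (w : Fin m → X),
      μBer {ω | ∀ i : Fin m, ω (i : ℕ) = w i} = ∏ i, ENNReal.ofReal (p (w i)))
    (F : (ℕ → X) × G → (ℕ → X) × G)
    (hF : ∀ (ω : ℕ → X) (g : G),
      F (ω, g) = (fun j => ω (j + 1), (⟨h (ω 0), hGmem (ω 0)⟩ : G) * g)) :
    Ergodic F (μBer.prod lamG) := by
  have : PolishSpace G := hGclosed.polishSpace
  have : lamG.IsMulLeftInvariant := ⟨hlamGinv⟩
  let P : PMF X := ⟨fun x => ENNReal.ofReal (p x), ENNReal.summable.hasSum_iff.2 <| by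
    rw [← ENNReal.ofReal_tsum_of_nonneg (fun x => (hp x).le) hpsum.summable, hpsum.tsum_eq,
      ENNReal.ofReal_one]⟩
  have hP (x : X) : P.toMeasure {x} = ENNReal.ofReal (p x) :=
    P.toMeasure_apply_singleton x (measurableSet_singleton x)
  obtain rfl : μBer = bernoulliMeasure P.toMeasure :=
    eq_bernoulliMeasure_of_cylinder _ fun m w => by simp_rw [hcyl, hP]
  obtain rfl : F = skewProduct (fun x => (⟨h x, hGmem x⟩ : G)) := funext fun z => hF z.1 z.2
  exact ergodic_skewProduct (measurable_of_countable _) fun H hH hHmem =>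
    eq_top_of_isClosed_of_forall_mem hGclosed hGmem hGmin hH fun x =>
      ae_iff_of_countable.1 hHmem x (by simpa [hP] using hp x)

instance {d : ℕ} : PolishSpace (Matrix.orthogonalGroup (Fin d) ℝ) :=
  have : PolishSpace (Matrix (Fin d) (Fin d) ℝ) := inferInstanceAs (PolishSpace (Fin d → Fin d → ℝ))
  isClosed_unitary.polishSpace

theorem stmt8
    (d n : ℕ)
    (h : Fin n → Matrix.orthogonalGroup (Fin d) ℝ)
    -- `G` is the closure of the subgroup generated by `h 1, ..., h n`,
    -- i.e. the smallest closed subgroup containing them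
    (G : Subgroup (Matrix.orthogonalGroup (Fin d) ℝ))
    (hGclosed : IsClosed (G : Set (Matrix.orthogonalGroup (Fin d) ℝ)))
    (hGmem : ∀ i, h i ∈ G)
    (hGmin : ∀ H : Subgroup (Matrix.orthogonalGroup (Fin d) ℝ),
      IsClosed (H : Set (Matrix.orthogonalGroup (Fin d) ℝ)) → (∀ i, h i ∈ H) → G ≤ H)
    -- `lamG` is the normalized Haar measure of `G`
    (lamG : Measure G) (hlamGprob : IsProbabilityMeasure lamG)
    (hlamGinv : ∀ g₀ : G, lamG.map (fun g => g₀ * g) = lamG)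
    -- strictly positive probability vector and the Bernoulli measure `p^ℕ`
    (p : Fin n → ℝ) (hp : ∀ i, 0 < p i) (hpsum : ∑ i, p i = 1)
    (μBer : Measure (ℕ → Fin n)) (hμBerprob : IsProbabilityMeasure μBer)
    (hcyl : ∀ (m : ℕ) (w : Fin m → Fin n),
      μBer {ω | ∀ i : Fin m, ω (i : ℕ) = w i} = ∏ i, ENNReal.ofReal (p (w i)))
    -- the skew product `F (ω, g) = (σ ω, h_{ω₀} g)`
    (F : (ℕ → Fin n) × G → (ℕ → Fin n) × G)
    (hF : ∀ (ω : ℕ → Fin n) (g : G),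
      F (ω, g) = (fun j => ω (j + 1), (⟨h (ω 0), hGmem (ω 0)⟩ : G) * g)) :
    (μBer.prod lamG).map F = μBer.prod lamG ∧
    ∀ A : Set ((ℕ → Fin n) × G), MeasurableSet A → F ⁻¹' A = A →
      (μBer.prod lamG) A = 0 ∨ (μBer.prod lamG) A = 1 := by
  have : BorelSpace G := ⟨rfl⟩
  have hF_ergodic := stmt8_general h G hGclosed hGmem hGmin lamG hlamGinv p hp
    (hpsum ▸ hasSum_fintype p) μBer hcyl F hF
  exact ⟨hF_ergodic.map_eq, fun A hA hinv => hF_ergodic.prob_eq_zero_or_one hA hinv⟩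
end

section
/- (Local entropy averages.) Let 𝒜 be a finite alphabet, ρ ∈ (0,1), and equip 𝒜^ℕ with the metric d_ρ(x,y) = ρ^{n(x,y)}, where n(x,y) is the length of the longest common initial segment of x and y. Let η be the Bernoulli measure on 𝒜^ℕ for a strictly positive probability vector, and for a finite word u let η_u be the normalized restriction of η to the cylinder [u]. Let π be a k-dimensional subspace of ℝ^d and let F : 𝒜^ℕ → π be a 1-Lipschitz map. There is a constant C depending only on k (and on an upper bound for ρ away from 1) such that: if for η-almost every ω, liminf_{N→∞} (1/N) Σ_{j=1}^N H_{ρ^{j+1}}(F_*η_{(ω_1,...,ω_j)}) / log(1/ρ) ≥ α, then dim (F_*η) ≥ α − C/log(1/ρ). -/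
open MeasureTheory Metric Set Filter
open scoped ENNReal Topology

/-- The (lower Hausdorff) dimension of a measure:
`dim μ = inf { dim_H A : A Borel, μ A > 0 }`. -/
noncomputable def dimMeas {X : Type*} [EMetricSpace X] [MeasurableSpace X]
    (μ : Measure X) : ℝ≥0∞ :=
  ⨅ (A : Set X) (_ : MeasurableSet A) (_ : 0 < μ A), dimH A

/-- Shannon entropy of a measure on a `k`-dimensional subspace `π` with respect to the
partition of `π` into half-open grid cubes of side length `r` (the grid coordinates being
given by a linear isometry `e` with `ℝ^k`). -/
noncomputable def gridEntropy {d k : ℕ} (π : Submodule ℝ (EuclideanSpace ℝ (Fin d)))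
    (e : π ≃ₗᵢ[ℝ] EuclideanSpace ℝ (Fin k)) (r : ℝ) (μ : Measure π) : ℝ :=
  ∑' z : Fin k → ℤ,
    Real.negMulLog
      ((μ ((⇑e) ⁻¹' {x | ∀ i, x i ∈ Set.Ico (r * (z i : ℝ)) (r * ((z i : ℝ) + 1))})).toReal)

/-!
Encode a sequence by grid cubes: the `n`-th symbol is the cube of side `ρ ^ (n + 1)` containing the
image of a representative of the prefix of length `n + 1`. Because `F` is Lipschitz, this cube is
one of the `3 ^ k` neighbours of the one containing `F ω`, so by Gibbs' inequality the entropy of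
`F_* η_u` at scale `ρ ^ (n + 1)`, for a prefix `u` of length `n`, exceeds the mean under `η_u` of
the information of the `n`-th symbol by at most a constant. Truncating the conditional probabilities
of the symbols at `1 / #𝒜`, which costs `log 2` because at most `#𝒜` symbols can follow `u`, makes
these informations bounded. The strong law of large numbers for bounded martingale differences then
replaces their conditional means by the informations themselves, and these telescope to the
information of the whole code. Hence almost every `ω` shares its code of length `n` with a set of
measure at most about `C ^ n * ρ ^ (n * α)`. The points mapped into a set of diameter at most
`ρ ^ n` have at most `5 ^ (k * n)` codes of length `n`, and the mass distribution principle gives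
the dimension.
-/

namespace LocalEntropy

open ProbabilityTheory

/-! ### Bounded martingale differences -/

section Martingale

variable {Ω : Type*} {m0 : MeasurableSpace Ω} {μ : Measure Ω}

theorem integrable_exp_of_le [IsFiniteMeasure μ] {Y : Ω → ℝ} {b : ℝ}
    (hY : AEStronglyMeasurable Y μ) (hYb : ∀ᵐ ω ∂μ, Y ω ≤ b) :
    Integrable (fun ω => Real.exp (Y ω)) μ := by
  refine .of_bound (Real.continuous_exp.comp_aestronglyMeasurable hY) (Real.exp b) ?_
  filter_upwards [hYb] with ω hω
  rw [Real.norm_eq_abs, Real.abs_exp]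
  exact Real.exp_le_exp.2 hω

theorem condExp_exp_le [IsFiniteMeasure μ] {m : MeasurableSpace Ω} (hm : m ≤ m0) {Y : Ω → ℝ}
    {b : ℝ} (hb : b ≤ 1) (hY : AEStronglyMeasurable[m0] Y μ) (hYb : ∀ᵐ ω ∂μ, |Y ω| ≤ b)
    (hmean : μ[Y | m] =ᵐ[μ] 0) :
    μ[fun ω => Real.exp (Y ω) | m] ≤ᵐ[μ] fun _ => Real.exp (b ^ 2) := by
  have hint : Integrable Y μ := .of_bound hY b hYb
  have hexp := integrable_exp_of_le hY (hYb.mono fun ω hω => (le_abs_self _).trans hω)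
  have hquad : (fun ω => Real.exp (Y ω)) ≤ᵐ[μ] (fun _ => 1 + b ^ 2) + Y := by
    filter_upwards [hYb] with ω hω
    have htaylor := (le_abs_self _).trans (Real.abs_exp_sub_one_sub_id_le (hω.trans hb))
    have hsq : Y ω ^ 2 ≤ b ^ 2 := sq_le_sq' (abs_le.1 hω).1 (abs_le.1 hω).2
    simp only [Pi.add_apply]
    linarith
  filter_upwards [condExp_mono (m := m) hexp ((integrable_const _).add hint) hquad,
    condExp_add (integrable_const (1 + b ^ 2)) hint m, hmean] with ω hmono hadd hzero
  rw [hadd, Pi.add_apply, hzero, condExp_const hm] at hmono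
  simp only [Pi.zero_apply, add_zero] at hmono
  linarith [Real.add_one_le_exp (b ^ 2)]

theorem supermartingale_exp_sum [IsFiniteMeasure μ] {ℱ : Filtration ℕ m0} {Y : ℕ → Ω → ℝ} {b : ℝ}
    (hb : b ≤ 1) (hY : ∀ j, StronglyMeasurable[ℱ (j + 1)] (Y j))
    (hYb : ∀ j, ∀ᵐ ω ∂μ, |Y j ω| ≤ b) (hmean : ∀ j, μ[Y j | ℱ j] =ᵐ[μ] 0) :
    Supermartingale (fun n ω => Real.exp (∑ j ∈ Finset.range n, (Y j ω - b ^ 2))) ℱ μ := by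
  have hsum : ∀ n, StronglyMeasurable[ℱ n] fun ω => ∑ j ∈ Finset.range n, (Y j ω - b ^ 2) := by
    refine fun n => Finset.stronglyMeasurable_fun_sum _ fun j hj => ?_
    exact ((hY j).mono (ℱ.mono (Finset.mem_range.1 hj))).sub stronglyMeasurable_const
  have hadapted : StronglyAdapted ℱ fun n ω => Real.exp (∑ j ∈ Finset.range n, (Y j ω - b ^ 2)) :=
    fun n => Real.continuous_exp.comp_stronglyMeasurable (hsum n)
  have hint : ∀ n, Integrable (fun ω => Real.exp (∑ j ∈ Finset.range n, (Y j ω - b ^ 2))) μ := by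
    refine fun n => integrable_exp_of_le (b := ∑ _ ∈ Finset.range n, b)
      ((hsum n).mono (ℱ.le n)).aestronglyMeasurable ?_
    filter_upwards [ae_all_iff.2 hYb] with ω hω
    refine Finset.sum_le_sum fun j _ => ?_
    linarith [(abs_le.1 (hω j)).2, sq_nonneg b]
  refine supermartingale_nat hadapted hint fun n => ?_
  have hYn : AEStronglyMeasurable[m0] (Y n) μ := ((hY n).mono (ℱ.le _)).aestronglyMeasurable
  have hstep := integrable_exp_of_le hYn ((hYb n).mono fun ω hω => (le_abs_self _).trans hω)
  set P : Ω → ℝ := fun ω => Real.exp (∑ j ∈ Finset.range n, (Y j ω - b ^ 2) - b ^ 2)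
  have hsucc : (fun ω => Real.exp (∑ j ∈ Finset.range (n + 1), (Y j ω - b ^ 2)))
      = P * fun ω => Real.exp (Y n ω) := by
    ext ω
    rw [Pi.mul_apply, ← Real.exp_add, Finset.sum_range_succ, sub_add_eq_add_sub, add_sub_assoc]
  have hP : StronglyMeasurable[ℱ n] P :=
    Real.continuous_exp.comp_stronglyMeasurable ((hsum n).sub stronglyMeasurable_const)
  have hpull := condExp_mul_of_stronglyMeasurable_left hP (hsucc ▸ hint (n + 1)) hstep
  rw [hsucc]
  filter_upwards [hpull, condExp_exp_le (ℱ.le n) hb hYn (hYb n) (hmean n)] with ω hω hle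
  calc (μ[P * fun ω => Real.exp (Y n ω) | ℱ n]) ω
      = P ω * (μ[fun ω => Real.exp (Y n ω) | ℱ n]) ω := hω
    _ ≤ P ω * Real.exp (b ^ 2) := by gcongr
    _ = Real.exp (∑ j ∈ Finset.range n, (Y j ω - b ^ 2)) := by
      rw [← Real.exp_add, sub_add_cancel]

theorem ae_bddAbove_range_of_supermartingale [IsFiniteMeasure μ] {ℱ : Filtration ℕ m0}
    {f : ℕ → Ω → ℝ} (hf : Supermartingale f ℱ μ) (hnonneg : ∀ n ω, 0 ≤ f n ω) :
    ∀ᵐ ω ∂μ, BddAbove (Set.range fun n => f n ω) := by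
  have hbound : ∀ n, eLpNorm ((-f) n) 1 μ ≤ (∫ ω, f 0 ω ∂μ).toNNReal := by
    intro n
    rw [Pi.neg_apply, eLpNorm_neg, eLpNorm_one_eq_lintegral_enorm,
      ← ofReal_integral_norm_eq_lintegral_enorm (hf.integrable n)]
    simp only [Real.norm_of_nonneg (hnonneg _ _)]
    have := hf.setIntegral_le n.zero_le MeasurableSet.univ
    rw [setIntegral_univ, setIntegral_univ] at this
    exact ENNReal.ofReal_le_ofReal this
  filter_upwards [hf.neg.exists_ae_tendsto_of_bdd hbound] with ω ⟨c, hc⟩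
  simpa using hc.neg.bddAbove_range

theorem ae_eventually_sum_le_of_condExp_eq_zero [IsFiniteMeasure μ] {ℱ : Filtration ℕ m0}
    {Y : ℕ → Ω → ℝ} {B : ℝ} (hY : ∀ j, StronglyMeasurable[ℱ (j + 1)] (Y j))
    (hYB : ∀ j, ∀ᵐ ω ∂μ, |Y j ω| ≤ B) (hmean : ∀ j, μ[Y j | ℱ j] =ᵐ[μ] 0) {ε : ℝ} (hε : 0 < ε) :
    ∀ᵐ ω ∂μ, ∀ᶠ n : ℕ in atTop, ∑ j ∈ Finset.range n, Y j ω ≤ ε * n := by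
  obtain ⟨D, hBD, hD⟩ : ∃ D, B ≤ D ∧ 0 < D := ⟨max B 1, le_max_left .., by positivity⟩
  obtain ⟨t, ht, htD, htε⟩ : ∃ t > 0, t * D ≤ 1 ∧ t * D ^ 2 ≤ ε / 2 := by
    refine ⟨min (1 / D) (ε / 2 / D ^ 2), by positivity, ?_, ?_⟩
    · exact (le_div_iff₀ hD).1 (min_le_left ..)
    · exact (le_div_iff₀ (by positivity)).1 (min_le_right ..)
  have hsuper : Supermartingale
      (fun n ω => Real.exp (∑ j ∈ Finset.range n, (t * Y j ω - (t * D) ^ 2))) ℱ μ := by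
    refine supermartingale_exp_sum htD (fun j => (hY j).const_mul t) (fun j => ?_) fun j => ?_
    · filter_upwards [hYB j] with ω hω
      rw [abs_mul, abs_of_pos ht]
      exact mul_le_mul_of_nonneg_left (hω.trans hBD) ht.le
    · filter_upwards [condExp_smul t (Y j) (ℱ j), hmean j] with ω hsmul hzero
      rw [Pi.smul_apply, hzero, Pi.zero_apply, smul_zero] at hsmul
      exact hsmul
  filter_upwards [ae_bddAbove_range_of_supermartingale hsuper fun _ _ => (Real.exp_pos _).le]
    with ω ⟨M, hM⟩
  filter_upwards [eventually_ge_atTop ⌈2 * Real.log M / (t * ε)⌉₊] with n hn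
  have hlog : t * ∑ j ∈ Finset.range n, Y j ω - n * (t * D) ^ 2 ≤ Real.log M := by
    have hexp : Real.exp (∑ j ∈ Finset.range n, (t * Y j ω - (t * D) ^ 2)) ≤ M := hM ⟨n, rfl⟩
    rw [Finset.sum_sub_distrib, ← Finset.mul_sum, Finset.sum_const, Finset.card_range,
      nsmul_eq_mul] at hexp
    exact (Real.le_log_iff_exp_le ((Real.exp_pos _).trans_le hexp)).2 hexp
  have hsmall : Real.log M ≤ t * (ε / 2 * n) := by
    have := (div_le_iff₀ (by positivity)).1 (Nat.ceil_le.1 hn)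
    linarith
  have hdrift : n * (t * D) ^ 2 ≤ t * (ε / 2 * n) := calc
    n * (t * D) ^ 2 = t * n * (t * D ^ 2) := by ring
    _ ≤ t * n * (ε / 2) := by gcongr
    _ = t * (ε / 2 * n) := by ring
  exact le_of_mul_le_mul_left (by linarith) ht

theorem ae_eventually_sum_condExp_le [IsFiniteMeasure μ] {ℱ : Filtration ℕ m0} {Z : ℕ → Ω → ℝ}
    {B : ℝ} (hZ : ∀ j, StronglyMeasurable[ℱ (j + 1)] (Z j)) (hZB : ∀ j ω, |Z j ω| ≤ B)
    {ε : ℝ} (hε : 0 < ε) :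
    ∀ᵐ ω ∂μ, ∀ᶠ n : ℕ in atTop,
      ∑ j ∈ Finset.range n, (μ[Z j | ℱ j]) ω ≤ ∑ j ∈ Finset.range n, Z j ω + ε * n := by
  have hint : ∀ j, Integrable (Z j) μ := fun j =>
    .of_bound ((hZ j).mono (ℱ.le _)).aestronglyMeasurable B (.of_forall (hZB j))
  have hsum := ae_eventually_sum_le_of_condExp_eq_zero (μ := μ) (ℱ := ℱ)
    (Y := fun j => μ[Z j | ℱ j] - Z j) (B := B + B)
    (fun j => (stronglyMeasurable_condExp.mono (ℱ.mono j.le_succ)).sub (hZ j))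
    (fun j => ?_) (fun j => ?_) hε
  · filter_upwards [hsum] with ω hω
    filter_upwards [hω] with n hn
    simp only [Pi.sub_apply, Finset.sum_sub_distrib] at hn
    linarith
  · have hcond := ae_bdd_abs_condExp_of_ae_bdd_abs (m := ℱ j) (.of_forall (hZB j) : ∀ᵐ ω ∂μ, _)
    filter_upwards [hcond] with ω hω
    exact (abs_sub _ _).trans (add_le_add hω (hZB j ω))
  · filter_upwards [condExp_sub integrable_condExp (hint j) (ℱ j)] with ω hω
    rw [hω, condExp_of_stronglyMeasurable (ℱ.le j) stronglyMeasurable_condExp integrable_condExp]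
    exact sub_self _

end Martingale

/-! ### The prefix filtration -/

section CondExp

variable {Ω W : Type*} {m0 : MeasurableSpace Ω} {μ : Measure Ω} [Countable W] [MeasurableSpace W]
  [MeasurableSingletonClass W] {f : Ω → W}

theorem ae_measure_preimage_singleton_ne_zero (hf : Measurable f) :
    ∀ᵐ ω ∂μ, μ (f ⁻¹' {f ω}) ≠ 0 := by
  refine ae_of_ae_map (p := fun w => μ (f ⁻¹' {w}) ≠ 0) hf.aemeasurable ?_
  rw [ae_iff_of_countable]
  intro w hw
  rwa [Measure.map_apply hf (measurableSet_singleton w)] at hw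

theorem condExp_comap_ae_eq [IsFiniteMeasure μ] (hf : Measurable f) {g : Ω → ℝ}
    (hg : Integrable g μ) :
    μ[g | MeasurableSpace.comap f inferInstance] =ᵐ[μ] fun ω => ∫ x, g x ∂μ[|f ⁻¹' {f ω}] := by
  filter_upwards [ae_measure_preimage_singleton_ne_zero hf] with ω hω
  set S := f ⁻¹' {f ω}
  have hS : MeasurableSet S := hf (measurableSet_singleton _)
  have hconst : ∀ x ∈ S, (μ[g | MeasurableSpace.comap f inferInstance]) x
      = (μ[g | MeasurableSpace.comap f inferInstance]) ω :=
    fun x hx => stronglyMeasurable_condExp.factorsThrough hx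
  have hint := setIntegral_condExp hf.comap_le hg ⟨{f ω}, measurableSet_singleton _, rfl⟩
  rw [setIntegral_congr_fun hS hconst, setIntegral_const, smul_eq_mul] at hint
  rw [ProbabilityTheory.cond, integral_smul_measure, ← hint, ENNReal.toReal_inv, smul_eq_mul]
  exact (inv_mul_cancel_left₀ (ENNReal.toReal_ne_zero.2 ⟨hω, measure_ne_top μ S⟩) _).symm

end CondExp

section PrefixFiltration

variable {A : Type*}

theorem preimage_restrict_range_singleton (ω : ℕ → A) (n : ℕ) :
    (Finset.range n).restrict (π := fun _ => A) ⁻¹' {(Finset.range n).restrict ω} =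
      PiNat.cylinder ω n := by
  ext x
  simp [funext_iff, PiNat.mem_cylinder_iff]

variable [MeasurableSpace A]

/-- The filtration of `ℕ → A` whose `n`-th σ-algebra is generated by the first `n` letters. (In
`Filtration.piLE` the `n`-th σ-algebra knows `n + 1` letters.) -/
def prefixFiltration (A : Type*) [MeasurableSpace A] :
    Filtration ℕ (MeasurableSpace.pi : MeasurableSpace (ℕ → A)) where
  seq n := Filtration.piFinset (Finset.range n)
  mono' _ _ h := Filtration.piFinset.mono (Finset.range_mono h)
  le' _ := Filtration.piFinset.le _

theorem measurable_of_dependsOn_Iio [Countable A] [MeasurableSingletonClass A] {β : Type*}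
    [MeasurableSpace β] [Nonempty β] {n : ℕ} {f : (ℕ → A) → β} (hf : DependsOn f (Iio n)) :
    Measurable[prefixFiltration A n] f := by
  rw [← Finset.coe_range, dependsOn_iff_exists_comp] at hf
  obtain ⟨g, rfl⟩ := hf
  exact (measurable_of_countable g).comp (comap_measurable _)

variable [MeasurableSingletonClass A]

theorem measurableSet_cylinder (ω : ℕ → A) (n : ℕ) : MeasurableSet (PiNat.cylinder ω n) := by
  rw [← preimage_restrict_range_singleton]
  exact (Finset.range n).measurable_restrict (measurableSet_singleton _)

variable [Countable A] {η : Measure (ℕ → A)}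

theorem ae_forall_measure_cylinder_ne_zero :
    ∀ᵐ ω ∂η, ∀ n, η (PiNat.cylinder ω n) ≠ 0 := by
  rw [ae_all_iff]
  intro n
  simpa only [preimage_restrict_range_singleton] using
    ae_measure_preimage_singleton_ne_zero (μ := η) (Finset.range n).measurable_restrict

theorem condExp_prefixFiltration_ae_eq [IsFiniteMeasure η] {g : (ℕ → A) → ℝ}
    (hg : Integrable g η) (n : ℕ) :
    η[g | prefixFiltration A n] =ᵐ[η] fun ω => ∫ x, g x ∂η[|PiNat.cylinder ω n] := by
  have hcomap := condExp_comap_ae_eq (Finset.range n).measurable_restrict hg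
  simp only [preimage_restrict_range_singleton] at hcomap
  exact hcomap

end PrefixFiltration

/-! ### Entropy and the Gibbs inequality -/

section Window

variable {G : Type*} [AddCommGroup G] {T Δ : Finset G} {w : G → ℝ}

open Classical in
/-- The total `w`-weight of the points of `T` that lie in the translate `z + Δ`. -/
noncomputable def windowSum (T Δ : Finset G) (w : G → ℝ) (z : G) : ℝ := ∑ t ∈ T with t - z ∈ Δ, w t

theorem le_windowSum (hw : ∀ t ∈ T, 0 < w t) {t z : G} (ht : t ∈ T) (hz : t - z ∈ Δ) :
    w t ≤ windowSum T Δ w z := by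
  classical
  exact Finset.single_le_sum (fun s hs => (hw s (Finset.filter_subset _ _ hs)).le)
    (Finset.mem_filter.2 ⟨ht, hz⟩)

theorem sum_windowSum_le (hw : ∀ t ∈ T, 0 < w t) (S : Finset G) :
    ∑ z ∈ S, windowSum T Δ w z ≤ Δ.card * ∑ t ∈ T, w t := by
  classical
  have hcard : ∀ t, ({z ∈ S | t - z ∈ Δ} : Finset G).card ≤ Δ.card := fun t =>
    Finset.card_le_card_of_injOn (t - ·) (fun z hz => (Finset.mem_filter.1 hz).2)
      (sub_right_injective.injOn)
  simp only [windowSum, Finset.sum_filter]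
  rw [Finset.sum_comm, Finset.mul_sum]
  refine Finset.sum_le_sum fun t ht => ?_
  rw [← Finset.sum_filter, Finset.sum_const, nsmul_eq_mul]
  exact mul_le_mul_of_nonneg_right (mod_cast hcard t) (hw t ht).le

end Window

section Entropy

variable {Y : Type*} [MeasurableSpace Y]

/-- The Shannon entropy of a measure on a discrete space. -/
noncomputable def entropy (P : Measure Y) : ℝ := ∑' y, Real.negMulLog (P.real {y})

theorem entropy_nonneg (P : Measure Y) [IsZeroOrProbabilityMeasure P] : 0 ≤ entropy P :=
  tsum_nonneg fun _ => Real.negMulLog_nonneg measureReal_nonneg measureReal_le_one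

theorem entropy_eq_sum_of_ae_mem {P : Measure Y} {S : Finset Y} (hS : ∀ᵐ y ∂P, y ∈ S) :
    entropy P = ∑ y ∈ S, Real.negMulLog (P.real {y}) := by
  refine tsum_eq_sum fun y hy => ?_
  have hnull : P {y} = 0 := measure_mono_null (singleton_subset_iff.2 hy) (mem_ae_iff.1 hS)
  rw [Measure.real, hnull, ENNReal.toReal_zero, Real.negMulLog_zero]

variable [MeasurableSingletonClass Y]

theorem integrable_of_ae_mem_finset {P : Measure Y} [IsFiniteMeasure P] {S : Finset Y}
    (hS : ∀ᵐ y ∂P, y ∈ S) (f : Y → ℝ) : Integrable f P := by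
  rw [← Measure.restrict_eq_self_of_ae_mem (s := (S : Set Y)) hS]
  exact IntegrableOn.finset

theorem integral_eq_sum_of_ae_mem {P : Measure Y} [IsFiniteMeasure P] {S : Finset Y}
    (hS : ∀ᵐ y ∂P, y ∈ S) (f : Y → ℝ) : ∫ y, f y ∂P = ∑ y ∈ S, P.real {y} * f y := by
  have hrestrict := Measure.restrict_eq_self_of_ae_mem (s := (S : Set Y)) hS
  calc ∫ y, f y ∂P = ∫ y in S, f y ∂P := by rw [hrestrict]
    _ = ∑ y ∈ S, P.real {y} * f y := setIntegral_finset S IntegrableOn.finset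

theorem negMulLog_le_mul_neg_log_add_sub {p q : ℝ} (hp : 0 ≤ p) (hq : 0 < q) :
    Real.negMulLog p ≤ p * -Real.log q + (q - p) := by
  rcases hp.eq_or_lt with rfl | hp
  · simpa using hq.le
  · have hlog := Real.log_le_sub_one_of_pos (div_pos hq hp)
    rw [Real.log_div hq.ne' hp.ne'] at hlog
    have hmul := mul_le_mul_of_nonneg_left hlog hp.le
    rw [mul_sub, mul_sub, mul_div_cancel₀ q hp.ne', mul_one] at hmul
    rw [Real.negMulLog]
    linarith

theorem entropy_le_integral_neg_log_add_log {P : Measure Y} [IsProbabilityMeasure P]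
    {S : Finset Y} (hS : ∀ᵐ y ∂P, y ∈ S) {w : Y → ℝ} (hw : ∀ y ∈ S, 0 < w y) {M : ℝ}
    (hM : ∑ y ∈ S, w y ≤ M) : entropy P ≤ ∫ y, -Real.log (w y) ∂P + Real.log M := by
  obtain ⟨y₀, hy₀⟩ := hS.exists
  have hM0 : 0 < M := (Finset.sum_pos hw ⟨y₀, hy₀⟩).trans_le hM
  have hone : ∑ y ∈ S, P.real {y} = 1 := by
    simpa using (integral_eq_sum_of_ae_mem hS fun _ => 1).symm
  have hratio : ∑ y ∈ S, w y / M ≤ 1 := by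
    rw [← Finset.sum_div]
    exact (div_le_one hM0).2 hM
  rw [entropy_eq_sum_of_ae_mem hS, integral_eq_sum_of_ae_mem hS]
  calc ∑ y ∈ S, Real.negMulLog (P.real {y})
      ≤ ∑ y ∈ S, (P.real {y} * -Real.log (w y / M) + (w y / M - P.real {y})) :=
        Finset.sum_le_sum fun y hy =>
          negMulLog_le_mul_neg_log_add_sub measureReal_nonneg (div_pos (hw y hy) hM0)
    _ = ∑ y ∈ S, (P.real {y} * -Real.log (w y) + P.real {y} * Real.log M
          + (w y / M - P.real {y})) := by
        refine Finset.sum_congr rfl fun y hy => ?_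
        rw [Real.log_div (hw y hy).ne' hM0.ne']
        ring
    _ = ∑ y ∈ S, P.real {y} * -Real.log (w y) + Real.log M + (∑ y ∈ S, w y / M - 1) := by
        rw [Finset.sum_add_distrib, Finset.sum_add_distrib, Finset.sum_sub_distrib,
          ← Finset.sum_mul, hone, one_mul]
    _ ≤ ∑ y ∈ S, P.real {y} * -Real.log (w y) + Real.log M := by linarith

theorem entropy_map_le_of_sub_mem [AddCommGroup Y] [Countable Y] {Ω : Type*} [MeasurableSpace Ω]
    {P : Measure Ω} [IsProbabilityMeasure P] {c g : Ω → Y} (hc : Measurable c) (hg : Measurable g)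
    {Δ T : Finset Y} (hΔ : ∀ᵐ x ∂P, c x - g x ∈ Δ) (hT : ∀ᵐ x ∂P, c x ∈ T) {w : Y → ℝ}
    (hw : ∀ y ∈ T, 0 < w y) {M : ℝ} (hM : ∑ y ∈ T, w y ≤ M) :
    entropy (P.map g) ≤ ∫ x, -Real.log (w (c x)) ∂P + Real.log (Δ.card * M) := by
  classical
  set R : Y → ℝ := windowSum T Δ w
  set S : Finset Y := (T ×ˢ Δ).image fun p => p.1 - p.2
  have hRpos : ∀ z ∈ S, 0 < R z := by
    intro z hz
    obtain ⟨⟨t, a⟩, hta, rfl⟩ := Finset.mem_image.1 hz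
    rw [Finset.mem_product] at hta
    exact (hw t hta.1).trans_le (le_windowSum hw hta.1 (by simpa using hta.2))
  have hRsum : ∑ z ∈ S, R z ≤ Δ.card * M := (sum_windowSum_le hw S).trans (by gcongr)
  have hgS : ∀ᵐ x ∂P, g x ∈ S := by
    filter_upwards [hΔ, hT] with x hxΔ hxT
    exact Finset.mem_image.2 ⟨(c x, c x - g x), Finset.mk_mem_product hxT hxΔ, by simp⟩
  have hprob := Measure.isProbabilityMeasure_map (μ := P) hg.aemeasurable
  have hmapS : ∀ᵐ y ∂P.map g, y ∈ S := (ae_map_iff hg.aemeasurable S.measurableSet).2 hgS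
  have hmapT : ∀ᵐ y ∂P.map c, y ∈ T := (ae_map_iff hc.aemeasurable T.measurableSet).2 hT
  have hmono : ∫ x, -Real.log (R (g x)) ∂P ≤ ∫ x, -Real.log (w (c x)) ∂P := by
    refine integral_mono_ae
      ((integrable_of_ae_mem_finset hmapS fun y => -Real.log (R y)).comp_measurable hg)
      ((integrable_of_ae_mem_finset hmapT fun y => -Real.log (w y)).comp_measurable hc) ?_
    filter_upwards [hΔ, hT] with x hxΔ hxT
    exact neg_le_neg (Real.log_le_log (hw _ hxT) (le_windowSum hw hxT hxΔ))
  have hgibbs := entropy_le_integral_neg_log_add_log hmapS hRpos hRsum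
  rw [integral_map hg.aemeasurable (measurable_of_countable _).aestronglyMeasurable] at hgibbs
  linarith

end Entropy

/-! ### Information of codes -/

section Code

variable {Ω Y : Type*} {c : ℕ → Ω → Y}

/-- The points whose first `n` code symbols agree with those of `ω`. -/
def codeClass (c : ℕ → Ω → Y) (n : ℕ) (ω : Ω) : Set Ω := {x | ∀ i < n, c i x = c i ω}

theorem codeClass_zero (ω : Ω) : codeClass c 0 ω = univ := by simp [codeClass]

theorem codeClass_succ (n : ℕ) (ω : Ω) :
    codeClass c (n + 1) ω = codeClass c n ω ∩ c n ⁻¹' {c n ω} := by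
  ext x
  simp only [codeClass, mem_ofPred_eq, Nat.forall_lt_succ_right, mem_inter_iff, mem_preimage,
    mem_singleton_iff]

theorem preimage_prefix_singleton (n : ℕ) (ω : Ω) :
    (fun x (i : Fin n) => c i x) ⁻¹' {fun i : Fin n => c i ω} = codeClass c n ω := by
  ext x
  simp [codeClass, funext_iff, Fin.forall_iff]

theorem codeClass_eq_of_mem {n : ℕ} {ω x : Ω} (hx : x ∈ codeClass c n ω) :
    codeClass c n x = codeClass c n ω := by
  rw [← preimage_prefix_singleton, ← preimage_prefix_singleton]
  exact congrArg (fun v => (fun x (i : Fin n) => c i x) ⁻¹' {v}) (funext fun i => hx i i.2)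

variable [MeasurableSpace Ω] {η : Measure Ω}

/-- The conditional probability of the `n`-th code symbol `y`, given the first `n` symbols of
`ω`. -/
noncomputable def condProb (η : Measure Ω) (c : ℕ → Ω → Y) (n : ℕ) (ω : Ω) (y : Y) : ℝ :=
  (η[|codeClass c n ω]).real (c n ⁻¹' {y})

/-- The information in the `n`-th code symbol of `ω` given the preceding ones, truncated at
`-log δ` to make it bounded. -/
noncomputable def truncInfo (η : Measure Ω) (c : ℕ → Ω → Y) (δ : ℝ) (n : ℕ) (ω : Ω) : ℝ :=
  -Real.log (max (condProb η c n ω (c n ω)) δ)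

theorem abs_truncInfo_le [IsProbabilityMeasure η] {δ : ℝ} (hδ : 0 < δ) (hδ1 : δ ≤ 1) (n : ℕ)
    (ω : Ω) : |truncInfo η c δ n ω| ≤ -Real.log δ := by
  have hle : max (condProb η c n ω (c n ω)) δ ≤ 1 := max_le measureReal_le_one hδ1
  rw [truncInfo, abs_neg, abs_of_nonpos (Real.log_nonpos (hδ.le.trans (le_max_right ..)) hle)]
  exact neg_le_neg (Real.log_le_log hδ (le_max_right ..))

variable [MeasurableSpace Y] [MeasurableSingletonClass Y]

theorem measurableSet_codeClass (hc : ∀ n, Measurable (c n)) (n : ℕ) (ω : Ω) :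
    MeasurableSet (codeClass c n ω) := by
  rw [← preimage_prefix_singleton]
  exact measurable_pi_lambda _ (fun i : Fin n => hc i) (measurableSet_singleton _)

theorem ae_forall_measure_codeClass_ne_zero [Countable Y] (hc : ∀ n, Measurable (c n)) :
    ∀ᵐ ω ∂η, ∀ n, η (codeClass c n ω) ≠ 0 := by
  rw [ae_all_iff]
  intro n
  simpa only [preimage_prefix_singleton] using ae_measure_preimage_singleton_ne_zero (μ := η)
    (measurable_pi_lambda _ fun i : Fin n => hc i)

theorem sum_truncInfo_le [IsProbabilityMeasure η] (hc : ∀ n, Measurable (c n)) {δ : ℝ} {ω : Ω}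
    (hω : ∀ n, η (codeClass c n ω) ≠ 0) (n : ℕ) :
    ∑ j ∈ Finset.range n, truncInfo η c δ j ω ≤ -Real.log (η.real (codeClass c n ω)) := by
  have hpos : ∀ n, 0 < η.real (codeClass c n ω) := fun n =>
    ENNReal.toReal_pos (hω n) (measure_ne_top _ _)
  induction n with
  | zero => simp [codeClass_zero]
  | succ n ih =>
    have hcond : condProb η c n ω (c n ω)
        = (η.real (codeClass c n ω))⁻¹ * η.real (codeClass c (n + 1) ω) := by
      rw [condProb, Measure.real, cond_apply (measurableSet_codeClass hc n ω), ENNReal.toReal_mul,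
        ENNReal.toReal_inv, codeClass_succ]
      rfl
    have hinfo : truncInfo η c δ n ω ≤ -Real.log (condProb η c n ω (c n ω)) := by
      refine neg_le_neg (Real.log_le_log ?_ (le_max_left ..))
      rw [hcond]
      exact mul_pos (inv_pos.2 (hpos n)) (hpos (n + 1))
    rw [hcond, Real.log_mul (inv_pos.2 (hpos n)).ne' (hpos (n + 1)).ne', Real.log_inv] at hinfo
    rw [Finset.sum_range_succ]
    linarith

theorem sum_max_condProb_le [IsProbabilityMeasure η] (hc : ∀ n, Measurable (c n)) {δ : ℝ}
    (hδ : 0 ≤ δ) (n : ℕ) (ω : Ω) (T : Finset Y) :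
    ∑ y ∈ T, max (condProb η c n ω y) δ ≤ 1 + T.card * δ := by
  have hprob : ∑ y ∈ T, condProb η c n ω y ≤ 1 := by
    simp only [condProb]
    rw [sum_measureReal_preimage_singleton T fun y _ => hc n (measurableSet_singleton y)]
    exact measureReal_le_one
  calc ∑ y ∈ T, max (condProb η c n ω y) δ
      ≤ ∑ y ∈ T, (condProb η c n ω y + δ) :=
        Finset.sum_le_sum fun y _ => max_le_add_of_nonneg measureReal_nonneg hδ
    _ = ∑ y ∈ T, condProb η c n ω y + T.card * δ := by
        rw [Finset.sum_add_distrib, Finset.sum_const, nsmul_eq_mul]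
    _ ≤ 1 + T.card * δ := by gcongr

theorem entropy_map_cond_le [AddCommGroup Y] [Countable Y] [IsProbabilityMeasure η]
    (hc : ∀ n, Measurable (c n)) {g : Ω → Y} (hg : Measurable g) {Δ T : Finset Y} {D : Set Ω}
    (hD : MeasurableSet D) (hη : η D ≠ 0) {n : ℕ} {ω : Ω} (hDω : D ⊆ codeClass c n ω)
    (hΔ : ∀ x ∈ D, c n x - g x ∈ Δ) (hT : ∀ x ∈ D, c n x ∈ T) {δ : ℝ} (hδ : 0 < δ) :
    entropy ((η[|D]).map g) ≤
      ∫ x, truncInfo η c δ n x ∂η[|D] + Real.log (Δ.card * (1 + T.card * δ)) := by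
  have := cond_isProbabilityMeasure hη
  have hinfo : ∫ x, truncInfo η c δ n x ∂η[|D]
      = ∫ x, -Real.log (max (condProb η c n ω (c n x)) δ) ∂η[|D] := by
    refine integral_congr_ae (ae_cond_of_forall_mem hD fun x hx => ?_)
    simp only [truncInfo, condProb, codeClass_eq_of_mem (hDω hx)]
  rw [hinfo]
  exact entropy_map_le_of_sub_mem (hc n) hg (ae_cond_of_forall_mem hD hΔ)
    (ae_cond_of_forall_mem hD hT) (fun y _ => hδ.trans_le (le_max_right ..))
    (sum_max_condProb_le hc hδ.le n ω T)

end Code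

section PrefixCode

variable {A Y : Type*} {c : ℕ → (ℕ → A) → Y}

theorem cylinder_subset_codeClass (hc : ∀ n, DependsOn (c n) (Iio (n + 1))) (n : ℕ) (ω : ℕ → A) :
    PiNat.cylinder ω n ⊆ codeClass c n ω :=
  fun _ hx i hi => hc i fun _ hj => hx _ ((Nat.le_of_lt_succ hj).trans_lt hi)

theorem dependsOn_codeClass (hc : ∀ n, DependsOn (c n) (Iio (n + 1))) (n : ℕ) :
    DependsOn (codeClass c n) (Iio n) :=
  fun _ _ h => codeClass_eq_of_mem (cylinder_subset_codeClass hc n _ fun i hi => h i hi)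

theorem exists_finset_code_mem_of_mem_cylinder [Finite A] {n : ℕ}
    (hc : DependsOn (c n) (Iio (n + 1))) (ω : ℕ → A) :
    ∃ T : Finset Y, T.card ≤ Nat.card A ∧ ∀ x ∈ PiNat.cylinder ω n, c n x ∈ T := by
  classical
  have := Fintype.ofFinite A
  refine ⟨Finset.univ.image fun a => c n (Function.update ω n a), ?_, fun x hx => ?_⟩
  · rw [Nat.card_eq_fintype_card]
    exact Finset.card_image_le
  · refine Finset.mem_image.2 ⟨x n, Finset.mem_univ _, hc fun i hi => ?_⟩
    rcases (Nat.lt_succ_iff.1 hi).lt_or_eq with hlt | rfl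
    · rw [Function.update_of_ne hlt.ne, hx i hlt]
    · rw [Function.update_self]

variable [MeasurableSpace A] {η : Measure (ℕ → A)}

theorem dependsOn_truncInfo (hc : ∀ n, DependsOn (c n) (Iio (n + 1))) (δ : ℝ) (n : ℕ) :
    DependsOn (truncInfo η c δ n) (Iio (n + 1)) := by
  intro x y h
  rw [truncInfo, truncInfo, condProb, condProb, hc n h,
    dependsOn_codeClass hc n fun i hi => h i (Nat.lt_succ_of_lt hi)]

variable [MeasurableSingletonClass A] [Finite A] [MeasurableSpace Y] [MeasurableSingletonClass Y]
  [AddCommGroup Y] [Countable Y] [IsProbabilityMeasure η]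

theorem entropy_map_cond_cylinder_le (hc : ∀ n, DependsOn (c n) (Iio (n + 1)))
    {g : (ℕ → A) → Y} (hg : Measurable g) {Δ : Finset Y} {n : ℕ} (hΔ : ∀ x, c n x - g x ∈ Δ)
    {ω : ℕ → A} (hω : η (PiNat.cylinder ω n) ≠ 0) :
    entropy ((η[|PiNat.cylinder ω n]).map g) ≤
      ∫ x, truncInfo η c (Nat.card A : ℝ)⁻¹ n x ∂η[|PiNat.cylinder ω n]
        + Real.log (2 * Δ.card) := by
  have : Nonempty A := ⟨ω 0⟩
  have hA : (0 : ℝ) < Nat.card A := mod_cast Nat.card_pos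
  have hΔ0 : (0 : ℝ) < Δ.card := mod_cast Finset.card_pos.2 ⟨_, hΔ ω⟩
  have hcm : ∀ n, Measurable (c n) := fun n =>
    (measurable_of_dependsOn_Iio (hc n)).mono ((prefixFiltration A).le _) le_rfl
  obtain ⟨T, hTcard, hT⟩ := exists_finset_code_mem_of_mem_cylinder (hc n) ω
  refine (entropy_map_cond_le hcm hg (measurableSet_cylinder ω n) hω
    (cylinder_subset_codeClass hc n ω) (fun x _ => hΔ x) hT (inv_pos.2 hA)).trans ?_
  have hweights : 1 + T.card * (Nat.card A : ℝ)⁻¹ ≤ 2 := by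
    have : T.card * (Nat.card A : ℝ)⁻¹ ≤ 1 :=
      mul_inv_le_one_of_le₀ (mod_cast hTcard) hA.le
    linarith
  rw [mul_comm 2]
  gcongr

theorem ae_eventually_sum_entropy_le (hc : ∀ n, DependsOn (c n) (Iio (n + 1)))
    {g : ℕ → (ℕ → A) → Y} (hg : ∀ n, Measurable (g n)) {Δ : Finset Y}
    (hΔ : ∀ n x, c n x - g n x ∈ Δ) {ε : ℝ} (hε : 0 < ε) :
    ∀ᵐ ω ∂η, ∀ᶠ n : ℕ in atTop,
      ∑ j ∈ Finset.range n, entropy ((η[|PiNat.cylinder ω j]).map (g j)) ≤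
        -Real.log (η.real (codeClass c n ω)) + n * (Real.log (2 * Δ.card) + ε) := by
  obtain ⟨ω₀⟩ := nonempty_of_isProbabilityMeasure η
  have : Nonempty A := ⟨ω₀ 0⟩
  have hcm : ∀ n, Measurable (c n) := fun n =>
    (measurable_of_dependsOn_Iio (hc n)).mono ((prefixFiltration A).le _) le_rfl
  have hcard : (1 : ℝ) ≤ Nat.card A := mod_cast Nat.card_pos
  set Z := truncInfo η c (Nat.card A : ℝ)⁻¹
  have hZ : ∀ j, StronglyMeasurable[prefixFiltration A (j + 1)] (Z j) := fun j =>
    (measurable_of_dependsOn_Iio (dependsOn_truncInfo hc _ j)).stronglyMeasurable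
  have hZB : ∀ j ω, |Z j ω| ≤ -Real.log (Nat.card A : ℝ)⁻¹ :=
    abs_truncInfo_le (by positivity) (inv_le_one_of_one_le₀ hcard)
  have hint : ∀ j, Integrable (Z j) η := fun j =>
    .of_bound ((hZ j).mono ((prefixFiltration A).le _)).aestronglyMeasurable _ (.of_forall (hZB j))
  filter_upwards [ae_eventually_sum_condExp_le hZ hZB hε, ae_forall_measure_cylinder_ne_zero,
    ae_forall_measure_codeClass_ne_zero hcm,
    ae_all_iff.2 fun j => condExp_prefixFiltration_ae_eq (hint j) j] with ω hsum hcyl hclass hcond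
  filter_upwards [hsum] with n hn
  calc ∑ j ∈ Finset.range n, entropy ((η[|PiNat.cylinder ω j]).map (g j))
      ≤ ∑ j ∈ Finset.range n, ((η[Z j | prefixFiltration A j]) ω + Real.log (2 * Δ.card)) := by
        refine Finset.sum_le_sum fun j _ => ?_
        rw [hcond j]
        exact entropy_map_cond_cylinder_le hc (hg j) (hΔ j) (hcyl j)
    _ = ∑ j ∈ Finset.range n, (η[Z j | prefixFiltration A j]) ω + n * Real.log (2 * Δ.card) := by
        rw [Finset.sum_add_distrib, Finset.sum_const, Finset.card_range, nsmul_eq_mul]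
    _ ≤ -Real.log (η.real (codeClass c n ω)) + n * (Real.log (2 * Δ.card) + ε) := by
        linarith [sum_truncInfo_le hcm (δ := (Nat.card A : ℝ)⁻¹) hclass n]

end PrefixCode

/-! ### Mass distribution -/

theorem dimMeas_map_le {X Y : Type*} [EMetricSpace X] [MeasurableSpace X] [EMetricSpace Y]
    [MeasurableSpace Y] {L : NNReal} {f : X → Y} (hf : LipschitzWith L f)
    (hf' : MeasurableEmbedding f) (μ : Measure X) : dimMeas (μ.map f) ≤ dimMeas μ := by
  refine le_iInf₂ fun S hS => le_iInf fun hpos => ?_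
  refine (iInf₂_le_of_le (f '' S) (hf'.measurableSet_image.2 hS) (iInf_le _ ?_)).trans
    (hf.dimH_image_le S)
  rwa [hf'.map_apply, preimage_image_eq S hf'.injective]

section MassDistribution

open scoped NNReal

variable {X : Type*} [EMetricSpace X] [MeasurableSpace X] [BorelSpace X]
  {s : ℝ≥0} {K r : ℝ≥0∞}

theorem le_dimH_of_measure_le_mul_ediam_rpow {μ : Measure X} {δ : ℝ≥0∞} (hδ : 0 < δ)
    (hK₀ : K ≠ 0) (hK : K ≠ ∞) (h : ∀ U : Set X, ediam U ≤ δ → μ U ≤ K * ediam U ^ (s : ℝ))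
    {S : Set X} (hS : μ S ≠ 0) : s ≤ dimH S := by
  have hle : K⁻¹ • μ ≤ μH[s] :=
    Measure.le_hausdorffMeasure s _ δ hδ fun U hU => (ENNReal.inv_mul_le_iff hK₀ hK).2 (h U hU)
  refine le_dimH_of_hausdorffMeasure_ne_zero (((?_ : (0 : ℝ≥0∞) < _).trans_le (hle S)).ne')
  exact ENNReal.mul_pos (ENNReal.inv_ne_zero.2 hK) hS

theorem exists_pow_lt_and_le_pow (hr : r < 1) {x : ℝ≥0∞} (hx : x ≠ 0) {n₀ : ℕ}
    (hxr : x ≤ r ^ n₀) : ∃ n ≥ n₀, r ^ (n + 1) < x ∧ x ≤ r ^ n := by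
  have hex : ∃ k, r ^ (n₀ + k) < x :=
    (((tendsto_add_atTop_nat n₀).congr fun k => add_comm k n₀).eventually
      ((ENNReal.tendsto_pow_atTop_nhds_zero_iff.2 hr).eventually_lt_const
        (pos_iff_ne_zero.2 hx))).exists
  classical
  obtain ⟨k, hk⟩ := Nat.exists_eq_add_one_of_ne_zero fun h : Nat.find hex = 0 =>
    (Nat.find_eq_zero hex).1 h |>.not_ge hxr
  refine ⟨n₀ + k, Nat.le_add_right _ _, ?_, not_lt.1 (Nat.find_min hex (hk ▸ Nat.lt_succ_self k))⟩
  simpa only [hk, add_assoc] using Nat.find_spec hex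

theorem le_dimH_of_measure_le_mul_pow_rpow {μ : Measure X} (hr₀ : r ≠ 0) (hr : r < 1)
    (hs : 0 < s) (hK₀ : K ≠ 0) (hK : K ≠ ∞) {n₀ : ℕ}
    (h : ∀ n ≥ n₀, ∀ U : Set X, ediam U ≤ r ^ n → μ U ≤ K * (r ^ n) ^ (s : ℝ))
    {S : Set X} (hS : μ S ≠ 0) : s ≤ dimH S := by
  have hrs₀ : r⁻¹ ^ (s : ℝ) ≠ 0 :=
    (ENNReal.rpow_pos (ENNReal.inv_pos.2 hr.ne_top) (ENNReal.inv_ne_top.2 hr₀)).ne'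
  have hrs : r⁻¹ ^ (s : ℝ) ≠ ∞ :=
    ENNReal.rpow_ne_top_of_nonneg s.coe_nonneg (ENNReal.inv_ne_top.2 hr₀)
  refine le_dimH_of_measure_le_mul_ediam_rpow (pos_iff_ne_zero.2 (pow_ne_zero n₀ hr₀))
    (mul_ne_zero hK₀ hrs₀) (ENNReal.mul_ne_top hK hrs) (fun U hU => ?_) hS
  rcases eq_or_ne (ediam U) 0 with hU₀ | hU₀
  · have hlim : Tendsto (fun n : ℕ => K * (r ^ n) ^ (s : ℝ)) atTop (𝓝 0) := by
      have hpow := (ENNReal.continuous_rpow_const (y := s)).tendsto 0 |>.comp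
        (ENNReal.tendsto_pow_atTop_nhds_zero_iff.2 hr)
      rw [ENNReal.zero_rpow_of_pos (by exact_mod_cast hs)] at hpow
      simpa using ENNReal.Tendsto.const_mul hpow (Or.inr hK)
    refine (ge_of_tendsto hlim ?_).trans zero_le
    filter_upwards [eventually_ge_atTop n₀] with n hn
    exact h n hn U (by simp [hU₀])
  · obtain ⟨n, hn, hlt, hle⟩ := exists_pow_lt_and_le_pow hr hU₀ hU
    calc μ U ≤ K * (r ^ n) ^ (s : ℝ) := h n hn U hle
      _ = K * (r⁻¹ * r ^ (n + 1)) ^ (s : ℝ) := by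
          rw [pow_succ', ← mul_assoc, ENNReal.inv_mul_cancel hr₀ hr.ne_top, one_mul]
      _ = K * r⁻¹ ^ (s : ℝ) * (r ^ (n + 1)) ^ (s : ℝ) := by
          rw [ENNReal.mul_rpow_of_nonneg _ _ s.coe_nonneg, mul_assoc]
      _ ≤ K * r⁻¹ ^ (s : ℝ) * ediam U ^ (s : ℝ) := by gcongr

theorem le_dimMeas_map {Ω : Type*} [MeasurableSpace Ω] {η : Measure Ω} {F : Ω → X}
    (hF : Measurable F) (hr₀ : r ≠ 0) (hr : r < 1) (hs : 0 < s) (hK₀ : K ≠ 0) (hK : K ≠ ∞)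
    {G : ℕ → Set Ω} (hG : ∀ᵐ ω ∂η, ∀ᶠ n in atTop, ω ∈ G n)
    (h : ∀ n, ∀ U : Set X, ediam U ≤ r ^ n → η (F ⁻¹' U ∩ G n) ≤ K * (r ^ n) ^ (s : ℝ)) :
    s ≤ dimMeas (η.map F) := by
  refine le_iInf₂ fun S hS => le_iInf fun hpos => ?_
  rw [Measure.map_apply hF hS] at hpos
  obtain ⟨m, hm⟩ : ∃ m, 0 < η (F ⁻¹' S ∩ {ω | ∀ n ≥ m, ω ∈ G n}) := by
    refine exists_measure_pos_of_not_measure_iUnion_null fun hnull => hpos.ne' ?_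
    refine measure_mono_null_ae ?_ hnull
    filter_upwards [hG] with ω hω hωS
    obtain ⟨m, hm⟩ := eventually_atTop.1 hω
    exact mem_iUnion.2 ⟨m, hωS, hm⟩
  have happly : ∀ {V : Set X}, MeasurableSet V →
      (η.restrict {ω | ∀ n ≥ m, ω ∈ G n}).map F V = η (F ⁻¹' V ∩ {ω | ∀ n ≥ m, ω ∈ G n}) :=
    fun hV => by rw [Measure.map_apply hF hV, Measure.restrict_apply (hF hV)]
  refine le_dimH_of_measure_le_mul_pow_rpow (n₀ := m)
    (μ := (η.restrict {ω | ∀ n ≥ m, ω ∈ G n}).map F) hr₀ hr hs hK₀ hK (fun n hn U hU => ?_)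
    ((happly hS).trans_ne hm.ne')
  calc (η.restrict {ω | ∀ n ≥ m, ω ∈ G n}).map F U
      ≤ (η.restrict {ω | ∀ n ≥ m, ω ∈ G n}).map F (closure U) := measure_mono subset_closure
    _ = η (F ⁻¹' closure U ∩ {ω | ∀ n ≥ m, ω ∈ G n}) := happly isClosed_closure.measurableSet
    _ ≤ η (F ⁻¹' closure U ∩ G n) :=
        measure_mono (inter_subset_inter_right _ fun ω hω => hω n hn)
    _ ≤ K * (r ^ n) ^ (s : ℝ) := h n _ ((ediam_closure U).trans_le hU)

end MassDistribution

/-! ### Grid codes -/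

theorem measure_le_prod_card_mul {Ω Y : Type*} [MeasurableSpace Ω] {μ : Measure Ω}
    {c : ℕ → Ω → Y} {n : ℕ} {V : Set Ω} {T : ℕ → Finset Y} (hT : ∀ x ∈ V, ∀ i < n, c i x ∈ T i)
    {M : ℝ≥0∞} (hM : ∀ x ∈ V, μ (codeClass c n x) ≤ M) :
    μ V ≤ (∏ i : Fin n, (T i).card : ℕ) * M := by
  classical
  set encode : Ω → Fin n → Y := fun x i => c i x
  have hcover : V ⊆ ⋃ γ ∈ Fintype.piFinset fun i : Fin n => T i, V ∩ encode ⁻¹' {γ} := fun x hx =>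
    mem_iUnion₂.2 ⟨encode x, Fintype.mem_piFinset.2 fun i => hT x hx i i.2, hx, rfl⟩
  have hfiber : ∀ γ, μ (V ∩ encode ⁻¹' {γ}) ≤ M := by
    intro γ
    rcases (V ∩ encode ⁻¹' {γ}).eq_empty_or_nonempty with hempty | ⟨x, hx, rfl⟩
    · simp [hempty]
    · have hclass : V ∩ encode ⁻¹' {encode x} ⊆ codeClass c n x :=
        fun y hy i hi => congrFun hy.2 ⟨i, hi⟩
      exact (measure_mono hclass).trans (hM x hx)
  calc μ V ≤ ∑ γ ∈ Fintype.piFinset fun i : Fin n => T i, μ (V ∩ encode ⁻¹' {γ}) :=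
        (measure_mono hcover).trans (measure_biUnion_finset_le _ _)
    _ ≤ (Fintype.piFinset fun i : Fin n => T i).card • M :=
        Finset.sum_le_card_nsmul _ _ _ fun γ _ => hfiber γ
    _ = (∏ i : Fin n, (T i).card : ℕ) * M := by rw [Fintype.card_piFinset, nsmul_eq_mul]

section Grid

variable {ι : Type*}

/-- The index of the half-open cube of side length `r`, in the partition of `ι → ℝ` into grid cubes
with a vertex at the origin, that contains `v`. -/
noncomputable def gridIndex (r : ℝ) (v : ι → ℝ) : ι → ℤ := fun i => ⌊v i / r⌋

theorem measurable_gridIndex (r : ℝ) : Measurable (gridIndex r : (ι → ℝ) → ι → ℤ) :=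
  measurable_pi_lambda _ fun i => Int.measurable_floor.comp (by fun_prop)

theorem abs_floor_sub_floor_le_one {a b : ℝ} (h : |a - b| ≤ 1) : |⌊a⌋ - ⌊b⌋| ≤ 1 := by
  have := abs_le.1 h
  rw [abs_le]
  constructor
  · have : ⌊b⌋ ≤ ⌊a + 1⌋ := Int.floor_mono (by linarith)
    rw [Int.floor_add_one] at this
    omega
  · have : ⌊a⌋ ≤ ⌊b + 1⌋ := Int.floor_mono (by linarith)
    rw [Int.floor_add_one] at this
    omega

variable [Fintype ι] [DecidableEq ι]

theorem gridIndex_sub_mem_Icc {r : ℝ} (hr : 0 < r) {u v : ι → ℝ} (h : dist u v ≤ r) :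
    gridIndex r u - gridIndex r v ∈ Finset.Icc (-1 : ι → ℤ) 1 := by
  have hcoord : ∀ i, |gridIndex r u i - gridIndex r v i| ≤ 1 := fun i => by
    refine abs_floor_sub_floor_le_one ?_
    rw [← sub_div, abs_div, abs_of_pos hr, div_le_one hr]
    exact (dist_le_pi_dist u v i).trans h
  rw [Finset.mem_Icc]
  exact ⟨fun i => (abs_le.1 (hcoord i)).1, fun i => (abs_le.1 (hcoord i)).2⟩

theorem card_Icc_neg_one_one :
    (Finset.Icc (-1 : ι → ℤ) 1).card = 3 ^ Fintype.card ι := by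
  simp [Pi.card_Icc]

theorem card_Icc_sub_two_add_two (b : ι → ℤ) :
    (Finset.Icc (b - 2) (b + 2)).card = 5 ^ Fintype.card ι := by
  have h (i : ι) : b i + 2 + 1 - (b i - 2) = 5 := by ring
  simp [Pi.card_Icc, h]

end Grid

theorem dependsOn_comp_piecewise {A β : Type*} (F : (ℕ → A) → β) (x₀ : ℕ → A)
    (m : ℕ) : DependsOn (fun x => F ((Iio m).piecewise x x₀)) (Iio m) := fun _ _ h =>
  congrArg F (funext fun i => by by_cases hi : i ∈ Iio m <;> simp [Set.piecewise, hi, h i])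

section PrefixLipschitz

variable {A E : Type*} [PseudoMetricSpace E] {ρ : ℝ} {F : (ℕ → A) → E}

/-- `F` is `1`-Lipschitz for the metric `ρ ^ n(x, y)` on sequences, where `n(x, y)` is the length of
the longest common prefix of `x` and `y`. -/
def PrefixLipschitz (ρ : ℝ) (F : (ℕ → A) → E) : Prop :=
  ∀ x y : ℕ → A, ∀ m : ℕ, (∀ i < m, x i = y i) → dist (F x) (F y) ≤ ρ ^ m

theorem PrefixLipschitz.comp {E' : Type*} [PseudoMetricSpace E'] (hF : PrefixLipschitz ρ F)
    {f : E → E'} (hf : LipschitzWith 1 f) : PrefixLipschitz ρ (f ∘ F) :=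
  fun x y m h => (hf.dist_le_mul _ _).trans (by simpa using hF x y m h)

theorem PrefixLipschitz.dist_piecewise_le (hF : PrefixLipschitz ρ F) (x₀ : ℕ → A) (m : ℕ)
    (x : ℕ → A) : dist (F ((Iio m).piecewise x x₀)) (F x) ≤ ρ ^ m :=
  hF _ _ m fun _ hi => (Iio m).piecewise_eq_of_mem x x₀ hi

theorem PrefixLipschitz.measurable [Countable A] [MeasurableSpace A] [MeasurableSingletonClass A]
    [Nonempty A] [MeasurableSpace E] [BorelSpace E] (hρ₀ : 0 ≤ ρ) (hρ : ρ < 1)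
    (hF : PrefixLipschitz ρ F) : Measurable F := by
  obtain ⟨x₀⟩ : Nonempty (ℕ → A) := inferInstance
  have : Nonempty E := ⟨F x₀⟩
  refine measurable_of_tendsto_metrizable (f := fun m x => F ((Iio m).piecewise x x₀))
    (fun m => ?_) (tendsto_pi_nhds.2 fun x => tendsto_iff_dist_tendsto_zero.2 ?_)
  · exact (measurable_of_dependsOn_Iio (dependsOn_comp_piecewise F x₀ m)).mono
      ((prefixFiltration A).le m) le_rfl
  · exact squeeze_zero (fun _ => dist_nonneg) (fun m => hF.dist_piecewise_le x₀ m x)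
      (tendsto_pow_atTop_nhds_zero_of_lt_one hρ₀ hρ)

end PrefixLipschitz

section GridCode

variable {A ι : Type*} {ρ : ℝ} {F : (ℕ → A) → ι → ℝ}

/-- The code of a sequence: its `n`-th symbol is the grid cube of side length `ρ ^ (n + 1)`
containing the image of a representative (completed by `x₀`) of the prefix of length `n + 1`.
Unlike the cube containing `F x`, it depends on that prefix only. -/
noncomputable def gridCode (ρ : ℝ) (F : (ℕ → A) → ι → ℝ) (x₀ : ℕ → A) (n : ℕ) (x : ℕ → A) :
    ι → ℤ :=
  gridIndex (ρ ^ (n + 1)) (F ((Iio (n + 1)).piecewise x x₀))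

theorem dependsOn_gridCode (ρ : ℝ) (F : (ℕ → A) → ι → ℝ) (x₀ : ℕ → A) (n : ℕ) :
    DependsOn (gridCode ρ F x₀ n) (Iio (n + 1)) := fun _ _ h =>
  congrArg (gridIndex _) (dependsOn_comp_piecewise F x₀ (n + 1) h)

variable [Fintype ι]

theorem gridCode_sub_gridIndex_mem_Icc [DecidableEq ι] (hρ : 0 < ρ) (hF : PrefixLipschitz ρ F)
    (x₀ : ℕ → A) (n : ℕ) (x : ℕ → A) :
    gridCode ρ F x₀ n x - gridIndex (ρ ^ (n + 1)) (F x) ∈ Finset.Icc (-1 : ι → ℤ) 1 :=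
  gridIndex_sub_mem_Icc (pow_pos hρ _) (hF.dist_piecewise_le x₀ (n + 1) x)

theorem gridCode_mem_Icc [DecidableEq ι] (hρ : 0 < ρ) (hF : PrefixLipschitz ρ F) (x₀ : ℕ → A)
    {n : ℕ} {x : ℕ → A} {v : ι → ℝ} (hv : dist (F x) v ≤ ρ ^ (n + 1)) :
    gridCode ρ F x₀ n x ∈
      Finset.Icc (gridIndex (ρ ^ (n + 1)) v - 2) (gridIndex (ρ ^ (n + 1)) v + 2) := by
  have hcode := Finset.mem_Icc.1 (gridCode_sub_gridIndex_mem_Icc hρ hF x₀ n x)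
  have hgrid := Finset.mem_Icc.1 (gridIndex_sub_mem_Icc (pow_pos hρ (n + 1)) hv)
  refine Finset.mem_Icc.2 ⟨?_, ?_⟩
  · have := add_le_add hcode.1 hgrid.1
    rwa [sub_add_sub_cancel, le_sub_iff_add_le', ← neg_add, one_add_one_eq_two,
      ← sub_eq_add_neg] at this
  · have := add_le_add hcode.2 hgrid.2
    rwa [sub_add_sub_cancel, sub_le_iff_le_add', one_add_one_eq_two] at this

theorem measure_preimage_inter_le [MeasurableSpace A] {η : Measure (ℕ → A)} (hρ₀ : 0 < ρ)
    (hρ : ρ ≤ 1) (hF : PrefixLipschitz ρ F) (x₀ : ℕ → A) {n : ℕ} {U : Set (ι → ℝ)}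
    (hU : ediam U ≤ ENNReal.ofReal ρ ^ n) (M : ℝ≥0∞) :
    η (F ⁻¹' U ∩ {ω | η (codeClass (gridCode ρ F x₀) n ω) ≤ M}) ≤
      (5 ^ Fintype.card ι) ^ n * M := by
  classical
  rcases (F ⁻¹' U).eq_empty_or_nonempty with hempty | ⟨y, hy⟩
  · simp [hempty]
  set b : ℕ → ι → ℤ := fun i => gridIndex (ρ ^ (i + 1)) (F y)
  have hT : ∀ x ∈ F ⁻¹' U ∩ {ω | η (codeClass (gridCode ρ F x₀) n ω) ≤ M}, ∀ i < n,
      gridCode ρ F x₀ i x ∈ Finset.Icc (b i - 2) (b i + 2) := by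
    rintro x ⟨hx, -⟩ i hi
    refine gridCode_mem_Icc hρ₀ hF x₀ ((?_ : dist (F x) (F y) ≤ ρ ^ n).trans
      (pow_le_pow_of_le_one hρ₀.le hρ hi))
    have hedist := (edist_le_ediam_of_mem (mem_preimage.1 hx) (mem_preimage.1 hy)).trans hU
    rwa [← ENNReal.ofReal_pow hρ₀.le, edist_dist,
      ENNReal.ofReal_le_ofReal_iff (by positivity)] at hedist
  refine (measure_le_prod_card_mul hT fun x hx => hx.2).trans_eq ?_
  simp [card_Icc_sub_two_add_two]

end GridCode

/-! ### Dimension from entropy averages -/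

theorem eventually_mul_le_sum_of_le_liminf {H : ℕ → ℝ} (hH : ∀ j, 0 ≤ H j) {α : ℝ}
    (hα : α ≤ atTop.liminf fun N : ℕ => 1 / (N : ℝ) * ∑ j ∈ Finset.Icc 1 N, H j) {a : ℝ}
    (ha : a < α) : ∀ᶠ n : ℕ in atTop, n * a ≤ ∑ j ∈ Finset.range n, H j := by
  obtain ⟨b, hab, hbα⟩ := exists_between ha
  have hbdd : IsBoundedUnder (· ≥ ·) atTop
      fun N : ℕ => 1 / (N : ℝ) * ∑ j ∈ Finset.Icc 1 N, H j :=
    isBoundedUnder_of ⟨0, fun N => mul_nonneg (by positivity) (Finset.sum_nonneg fun j _ => hH j)⟩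
  have hlarge : ∀ᶠ N : ℕ in atTop, a ≤ N * (b - a) :=
    (tendsto_natCast_atTop_atTop.atTop_mul_const (sub_pos.2 hab)).eventually_ge_atTop a
  rw [← map_add_atTop_eq_nat 1, eventually_map]
  filter_upwards [eventually_lt_of_lt_liminf (hbα.trans_le hα) hbdd, hlarge, eventually_gt_atTop 0]
    with N hN hNa hN₀
  rw [one_div_mul_eq_div, lt_div_iff₀ (by positivity)] at hN
  calc ((N + 1 : ℕ) : ℝ) * a ≤ b * N := by push_cast; linarith
    _ ≤ ∑ j ∈ Finset.Icc 1 N, H j := hN.le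
    _ ≤ ∑ j ∈ Finset.range (N + 1), H j :=
        Finset.sum_le_sum_of_subset_of_nonneg (fun j hj => by
          simp only [Finset.mem_Icc, Finset.mem_range] at hj ⊢; omega)
          fun j _ _ => hH j

theorem pow_pow_mul_exp_neg {ρ b : ℝ} (hρ : 0 < ρ) (hb : 0 < b) (s : ℝ) (k n : ℕ) :
    (b ^ k) ^ n * Real.exp (-(n * (s * Real.log (1 / ρ) + k * Real.log b))) = (ρ ^ n) ^ s := by
  rw [Real.rpow_def_of_pos (pow_pos hρ n), Real.log_pow, one_div, Real.log_inv]
  nth_rw 1 [← Real.exp_log hb]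
  rw [← Real.exp_nat_mul, ← Real.exp_nat_mul, ← Real.exp_add]
  ring_nf

section Coordinates

variable {A ι : Type*} [Finite A] [MeasurableSpace A] [MeasurableSingletonClass A] [Fintype ι]
  {ρ : ℝ} {F : (ℕ → A) → ι → ℝ} {η : Measure (ℕ → A)} [IsProbabilityMeasure η] {x₀ : ℕ → A}

theorem le_dimMeas_map_of_codeClass_le (hρ₀ : 0 < ρ) (hρ : ρ < 1) (hF : PrefixLipschitz ρ F)
    {s : NNReal} (hs : 0 < s)
    (h : ∀ᵐ ω ∂η, ∀ᶠ n : ℕ in atTop, η.real (codeClass (gridCode ρ F x₀) n ω) ≤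
      Real.exp (-(n * (s * Real.log (1 / ρ) + Fintype.card ι * Real.log 5)))) :
    s ≤ dimMeas (η.map F) := by
  set β : ℝ := s * Real.log (1 / ρ) + Fintype.card ι * Real.log 5
  have : Nonempty A := ⟨x₀ 0⟩
  have hr₀ : ENNReal.ofReal ρ ≠ 0 := by simpa using hρ₀
  have hscale : ∀ n : ℕ, ((5 : ℝ≥0∞) ^ Fintype.card ι) ^ n * ENNReal.ofReal (Real.exp (-(n * β))) =
      1 * (ENNReal.ofReal ρ ^ n) ^ (s : ℝ) := by
    intro n
    rw [one_mul, ← ENNReal.ofReal_pow hρ₀.le,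
      ENNReal.ofReal_rpow_of_nonneg (by positivity) s.coe_nonneg,
      ← pow_pow_mul_exp_neg hρ₀ (by norm_num : (0 : ℝ) < 5), ENNReal.ofReal_mul (by positivity),
      ENNReal.ofReal_pow (by positivity), ENNReal.ofReal_pow (by positivity), ENNReal.ofReal_ofNat]
  refine le_dimMeas_map (hF.measurable hρ₀.le hρ) hr₀ (ENNReal.ofReal_lt_one.2 hρ) hs one_ne_zero
    ENNReal.one_ne_top
    (G := fun n => {ω | η (codeClass (gridCode ρ F x₀) n ω) ≤ ENNReal.ofReal (Real.exp (-(n * β)))})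
    ?_ fun n U hU => (measure_preimage_inter_le hρ₀ hρ.le hF x₀ hU _).trans_eq (hscale n)
  filter_upwards [h] with ω hω
  filter_upwards [hω] with n hn
  exact (ENNReal.le_ofReal_iff_toReal_le (measure_ne_top _ _) (Real.exp_pos _).le).2 hn

theorem ae_eventually_sum_entropy_gridIndex_le (hρ₀ : 0 < ρ) (hρ : ρ < 1)
    (hF : PrefixLipschitz ρ F) {ε : ℝ} (hε : 0 < ε) :
    ∀ᵐ ω ∂η, ∀ᶠ n : ℕ in atTop,
      ∑ j ∈ Finset.range n,
          entropy ((η[|PiNat.cylinder ω j]).map fun x => gridIndex (ρ ^ (j + 1)) (F x)) ≤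
        -Real.log (η.real (codeClass (gridCode ρ F x₀) n ω)) +
          n * (Fintype.card ι * Real.log 3 + Real.log 2 + ε) := by
  classical
  have : Nonempty A := ⟨x₀ 0⟩
  have hFm := hF.measurable hρ₀.le hρ
  filter_upwards [ae_eventually_sum_entropy_le (η := η) (dependsOn_gridCode ρ F x₀)
    (fun n => (measurable_gridIndex (ρ ^ (n + 1))).comp hFm)
    (gridCode_sub_gridIndex_mem_Icc hρ₀ hF x₀) hε] with ω hω
  filter_upwards [hω] with n hn
  refine hn.trans_eq ?_
  rw [card_Icc_neg_one_one, Nat.cast_pow, Nat.cast_ofNat, Real.log_mul two_ne_zero (by positivity),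
    Real.log_pow, add_comm (Real.log 2)]

theorem le_dimMeas_map_of_le_sum_entropy (hρ₀ : 0 < ρ) (hρ : ρ < 1) (hF : PrefixLipschitz ρ F)
    {α : ℝ} (h : ∀ᵐ ω ∂η, ∀ a < α * Real.log (1 / ρ), ∀ᶠ n : ℕ in atTop,
      n * a ≤ ∑ j ∈ Finset.range n,
        entropy ((η[|PiNat.cylinder ω j]).map fun x => gridIndex (ρ ^ (j + 1)) (F x))) :
    ENNReal.ofReal (α - (Fintype.card ι * Real.log 15 + Real.log 2) / Real.log (1 / ρ)) ≤
      dimMeas (η.map F) := by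
  have hlogρ : 0 < Real.log (1 / ρ) := Real.log_pos (one_lt_one_div hρ₀ hρ)
  have hlog15 : Real.log 15 = Real.log 3 + Real.log 5 := by
    rw [← Real.log_mul (by norm_num) (by norm_num)]
    norm_num
  refine ENNReal.le_of_forall_nnreal_lt fun s hsα => ?_
  rcases eq_zero_or_pos s with rfl | hs
  · simp
  have hsα : s * Real.log (1 / ρ) + (Fintype.card ι * Real.log 15 + Real.log 2) <
      α * Real.log (1 / ρ) := by
    have := ENNReal.lt_ofReal_iff_toReal_lt ENNReal.coe_ne_top |>.1 hsα
    rwa [ENNReal.coe_toReal, lt_sub_comm, div_lt_iff₀ hlogρ, sub_mul, lt_sub_iff_add_lt'] at this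
  obtain ⟨a, hsa, haα⟩ := exists_between hsα
  obtain ⟨ω₀⟩ := nonempty_of_isProbabilityMeasure η
  refine le_dimMeas_map_of_codeClass_le (x₀ := ω₀) hρ₀ hρ hF hs ?_
  filter_upwards [h, ae_eventually_sum_entropy_gridIndex_le (η := η) (x₀ := ω₀) hρ₀ hρ hF
    (sub_pos.2 hsa)] with ω hω hωcode
  filter_upwards [hω a haα, hωcode] with n hn hncode
  refine (Real.le_exp_log _).trans (Real.exp_le_exp.2 ?_)
  have := hn.trans hncode
  rw [hlog15] at this
  linarith

end Coordinates

section Subspace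

variable {d k : ℕ} {π : Submodule ℝ (EuclideanSpace ℝ (Fin d))}

/-- The coordinates on `π` given by an isometry with `ℝ ^ k`, valued in `Fin k → ℝ` with its
supremum norm. -/
noncomputable def coords (e : π ≃ₗᵢ[ℝ] EuclideanSpace ℝ (Fin k)) : π ≃L[ℝ] (Fin k → ℝ) :=
  e.toContinuousLinearEquiv.trans (EuclideanSpace.equiv (Fin k) ℝ)

theorem lipschitzWith_coords (e : π ≃ₗᵢ[ℝ] EuclideanSpace ℝ (Fin k)) :
    LipschitzWith 1 (coords e) := by
  have h := (PiLp.lipschitzWith_ofLp 2 fun _ : Fin k => ℝ).comp e.lipschitz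
  rwa [one_mul] at h

theorem measurableEmbedding_coords (e : π ≃ₗᵢ[ℝ] EuclideanSpace ℝ (Fin k)) :
    MeasurableEmbedding (coords e) :=
  (coords e).toHomeomorph.measurableEmbedding

theorem gridEntropy_map {Ω : Type*} [MeasurableSpace Ω] (e : π ≃ₗᵢ[ℝ] EuclideanSpace ℝ (Fin k))
    {r : ℝ} (hr : 0 < r) (μ : Measure Ω) {F : Ω → π} (hF : Measurable F) :
    gridEntropy π e r (μ.map F) = entropy (μ.map fun x => gridIndex r (coords e (F x))) := by
  have hindex : Measurable fun v => gridIndex r (coords e v) :=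
    (measurable_gridIndex r).comp (measurableEmbedding_coords e).measurable
  have hcube (z : Fin k → ℤ) : e ⁻¹' {x | ∀ i, x i ∈ Ico (r * (z i : ℝ)) (r * (z i + 1))} =
      (fun v => gridIndex r (coords e v)) ⁻¹' {z} := by
    ext v
    simp only [mem_preimage, mem_singleton_iff, funext_iff, gridIndex, Int.floor_eq_iff,
      le_div_iff₀ hr, div_lt_iff₀ hr, mul_comm r]
    rfl
  have hmap : μ.map (fun x => gridIndex r (coords e (F x))) =
      (μ.map F).map fun v => gridIndex r (coords e v) := (Measure.map_map hindex hF).symm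
  refine tsum_congr fun z => congrArg Real.negMulLog ?_
  rw [hmap, map_measureReal_apply hindex (measurableSet_singleton z), hcube, measureReal_def]

theorem gridEntropy_map_nonneg {Ω : Type*} [MeasurableSpace Ω]
    (e : π ≃ₗᵢ[ℝ] EuclideanSpace ℝ (Fin k)) {r : ℝ} (hr : 0 < r) (μ : Measure Ω)
    [IsZeroOrProbabilityMeasure μ] {F : Ω → π} (hF : Measurable F) :
    0 ≤ gridEntropy π e r (μ.map F) := by
  rw [gridEntropy_map e hr μ hF]
  exact entropy_nonneg _

end Subspace

end LocalEntropy

open LocalEntropy ProbabilityTheory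

theorem stmt13_general {A : Type*} [Finite A] [MeasurableSpace A] [MeasurableSingletonClass A]
    {d k : ℕ} {π : Submodule ℝ (EuclideanSpace ℝ (Fin d))} (η : Measure (ℕ → A))
    [IsProbabilityMeasure η] {ρ : ℝ} (hρ₀ : 0 < ρ) (hρ : ρ < 1)
    (e : π ≃ₗᵢ[ℝ] EuclideanSpace ℝ (Fin k)) {F : (ℕ → A) → π} (hF : PrefixLipschitz ρ F) {α : ℝ}
    (hα : ∀ᵐ ω ∂η, α ≤ atTop.liminf fun N : ℕ => 1 / (N : ℝ) * ∑ j ∈ Finset.Icc 1 N,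
      gridEntropy π e (ρ ^ (j + 1)) ((η[|PiNat.cylinder ω j]).map F) / Real.log (1 / ρ)) :
    ENNReal.ofReal (α - (k * Real.log 15 + Real.log 2) / Real.log (1 / ρ)) ≤
      dimMeas (η.map F) := by
  obtain ⟨ω₀⟩ := nonempty_of_isProbabilityMeasure η
  have : Nonempty A := ⟨ω₀ 0⟩
  have hFm : Measurable F := hF.measurable hρ₀.le hρ
  have hcoords := le_dimMeas_map_of_le_sum_entropy (η := η) (α := α) hρ₀ hρ
    (hF.comp (lipschitzWith_coords e)) ?_
  · rw [Fintype.card_fin,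
      ← Measure.map_map (measurableEmbedding_coords e).measurable hFm] at hcoords
    exact hcoords.trans
      (dimMeas_map_le (lipschitzWith_coords e) (measurableEmbedding_coords e) _)
  · filter_upwards [hα] with ω hω a ha
    have hlogρ : 0 < Real.log (1 / ρ) := Real.log_pos (one_lt_one_div hρ₀ hρ)
    have hmean := eventually_mul_le_sum_of_le_liminf
      (fun j => div_nonneg (gridEntropy_map_nonneg e (pow_pos hρ₀ (j + 1)) _ hFm) hlogρ.le)
      hω ((div_lt_iff₀ hlogρ).2 ha)
    filter_upwards [hmean] with n hn
    rw [← Finset.sum_div, ← mul_div_assoc, div_le_div_iff_of_pos_right hlogρ] at hn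
    simpa only [gridEntropy_map e (pow_pos hρ₀ _) _ hFm, Function.comp_apply] using hn

theorem stmt13 (k : ℕ) (ρ₀ : ℝ) (hρ₀pos : 0 < ρ₀) (hρ₀lt : ρ₀ < 1) :
    ∃ C : ℝ, 0 < C ∧
      ∀ (d nA : ℕ)
        -- the Bernoulli measure `η` for a strictly positive probability vector on `Fin nA`
        (p : Fin nA → ℝ) (_ : ∀ a, 0 < p a) (_ : ∑ a, p a = 1)
        (η : Measure (ℕ → Fin nA)) (_ : IsProbabilityMeasure η)
        (_ : ∀ (m : ℕ) (w : Fin m → Fin nA),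
          η {ω | ∀ i : Fin m, ω (i : ℕ) = w i} = ∏ i, ENNReal.ofReal (p (w i)))
        (ρ : ℝ) (_ : 0 < ρ) (_ : ρ ≤ ρ₀)
        (π : Submodule ℝ (EuclideanSpace ℝ (Fin d))) (_ : Module.finrank ℝ π = k)
        (e : π ≃ₗᵢ[ℝ] EuclideanSpace ℝ (Fin k))
        -- `F` is `1`-Lipschitz from `(𝒜^ℕ, d_ρ)` to `π`
        (F : (ℕ → Fin nA) → π)
        (_ : ∀ (x y : ℕ → Fin nA) (m : ℕ), (∀ i < m, x i = y i) →
          dist (F x) (F y) ≤ ρ ^ m)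
        (α : ℝ),
        -- local entropy averages are asymptotically at least `α` almost surely
        (∀ᵐ ω ∂η, α ≤ atTop.liminf (fun N : ℕ =>
          (1 / (N : ℝ)) * ∑ j ∈ Finset.Icc 1 N,
            gridEntropy π e (ρ ^ (j + 1))
              (((η {ω' | ∀ i < j, ω' i = ω i})⁻¹ •
                  η.restrict {ω' | ∀ i < j, ω' i = ω i}).map F) /
              Real.log (1 / ρ))) →
        dimMeas (η.map F) ≥ ENNReal.ofReal (α - C / Real.log (1 / ρ)) := by
  refine ⟨k * Real.log 15 + Real.log 2, by positivity, ?_⟩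
  intro d nA _ _ _ η _ _ ρ hρ₀ hρ π _ e F hF α hα
  exact stmt13_general η hρ₀ (hρ.trans_lt hρ₀lt) e hF hα
end

section
/- Let X be a compact metric space and let 𝒫(X) be the space of Borel probability measures on X with the weak* topology. Then the map μ ↦ dim μ, where dim μ = inf{dim_H A : A Borel, μ(A) > 0}, is a Borel measurable function on 𝒫(X). -/
/-!
The sublevel sets of `μ ↦ dim μ` are built from the conditions "`μ` charges some `μH[s]`-null
Borel set", for `s > 0`. Being `μH[s]`-null is the same as having zero Hausdorff content, and the
content, unlike `μH[s]`, is outer regular with respect to open sets. Hence a finite measure `μ`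
charges a `μH[s]`-null Borel set if and only if for some `ε > 0` there are open sets of
arbitrarily small content and of `μ`-measure greater than `ε`: given such open sets with summable
contents, their limsup has `μ`-measure at least `ε` and, by Borel–Cantelli for the content, is null.

For `V` open, `{μ | ε < μ V}` is weak* open by the portmanteau theorem, so an arbitrary union of
such sets is open, and only countable operations in `ε`, in the bound on the content and in `s`
remain.
-/

open MeasureTheory Metric Set Filter
open scoped ENNReal Topology

open scoped NNReal

section HausdorffContent

variable {X : Type*} [PseudoEMetricSpace X] {s : ℝ} {A : Set X} {r : ℝ≥0∞}

theorem tendsto_ediam_thickening (A : Set X) :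
    Tendsto (fun δ : ℝ≥0 => ediam (thickening δ A)) (𝓝[>] 0) (𝓝 (ediam A)) := by
  have hupper : Tendsto (fun δ : ℝ≥0 => ediam A + 2 * (δ : ℝ≥0∞)) (𝓝[>] 0) (𝓝 (ediam A)) := by
    have hcont : Continuous fun δ : ℝ≥0 => ediam A + 2 * (δ : ℝ≥0∞) :=
      continuous_const.add
        ((ENNReal.continuous_const_mul ENNReal.ofNat_ne_top).comp ENNReal.continuous_coe)
    simpa using (hcont.tendsto 0).mono_left nhdsWithin_le_nhds
  refine tendsto_of_tendsto_of_tendsto_of_le_of_le' tendsto_const_nhds hupper ?_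
    (Eventually.of_forall fun δ => ediam_thickening_le δ)
  filter_upwards [self_mem_nhdsWithin] with δ hδ
  exact ediam_mono (self_subset_thickening (NNReal.coe_pos.2 hδ) A)

/-- The `s`-dimensional Hausdorff content: the infimum of `∑ (diam Uᵢ) ^ s` over all countable
covers, with no bound on the diameters. As for `μH[s]`, empty sets in a cover cost nothing, also
when `s ≤ 0`. -/
noncomputable def hausdorffContent (s : ℝ) : OuterMeasure X :=
  OuterMeasure.boundedBy fun A => ediam A ^ s

theorem hausdorffContent_lt_iff :
    hausdorffContent s A < r ↔
      ∃ t : ℕ → Set X, A ⊆ ⋃ n, t n ∧ ∑' n, ⨆ _ : (t n).Nonempty, ediam (t n) ^ s < r := by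
  simp only [hausdorffContent, OuterMeasure.boundedBy_apply, iInf_lt_iff, exists_prop]

theorem exists_isOpen_superset_hausdorffContent_lt_of_ediam_rpow_lt
    (h : ⨆ _ : A.Nonempty, ediam A ^ s < r) :
    ∃ V, IsOpen V ∧ A ⊆ V ∧ hausdorffContent s V < r := by
  rcases A.eq_empty_or_nonempty with rfl | hA
  · exact ⟨∅, isOpen_empty, Subset.rfl, by simpa using h⟩
  have hlim : Tendsto (fun δ : ℝ≥0 => ediam (thickening δ A) ^ s) (𝓝[>] 0) (𝓝 (ediam A ^ s)) :=
    (ENNReal.continuous_rpow_const.tendsto _).comp (tendsto_ediam_thickening A)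
  rw [ciSup_pos hA] at h
  obtain ⟨δ, hδr, hδ⟩ := ((hlim.eventually_lt_const h).and self_mem_nhdsWithin).exists
  exact ⟨thickening δ A, isOpen_thickening, self_subset_thickening (NNReal.coe_pos.2 hδ) A,
    (OuterMeasure.boundedBy_le _).trans_lt hδr⟩

theorem exists_isOpen_superset_hausdorffContent_lt (h : hausdorffContent s A < r) :
    ∃ V, IsOpen V ∧ A ⊆ V ∧ hausdorffContent s V < r := by
  obtain ⟨t, hAt, hsum⟩ := hausdorffContent_lt_iff.1 h
  set c : ℕ → ℝ≥0∞ := fun n => ⨆ _ : (t n).Nonempty, ediam (t n) ^ s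
  obtain ⟨ε, hε, hεsum⟩ := ENNReal.exists_pos_sum_of_countable' (tsub_pos_of_lt hsum).ne' ℕ
  have hc : ∀ n, c n < c n + ε n := fun n =>
    ENNReal.lt_add_right (ENNReal.ne_top_of_tsum_ne_top hsum.ne_top n) (hε n).ne'
  choose V hVopen htV hV using fun n =>
    exists_isOpen_superset_hausdorffContent_lt_of_ediam_rpow_lt (hc n)
  refine ⟨⋃ n, V n, isOpen_iUnion hVopen, hAt.trans (iUnion_mono htV), ?_⟩
  calc hausdorffContent s (⋃ n, V n) ≤ ∑' n, hausdorffContent s (V n) := measure_iUnion_le V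
    _ ≤ ∑' n, (c n + ε n) := ENNReal.tsum_le_tsum fun n => (hV n).le
    _ = ∑' n, c n + ∑' n, ε n := ENNReal.tsum_add
    _ < ∑' n, c n + (r - ∑' n, c n) := ENNReal.add_lt_add_left hsum.ne_top hεsum
    _ = r := add_tsub_cancel_of_le hsum.le

end HausdorffContent

section HausdorffMeasure

variable {X : Type*} [EMetricSpace X] [MeasurableSpace X] [BorelSpace X] {s : ℝ} {A : Set X}

theorem hausdorffContent_le_hausdorffMeasure (s : ℝ) (A : Set X) :
    hausdorffContent s A ≤ μH[s] A := by
  rw [Measure.hausdorffMeasure_apply, hausdorffContent, OuterMeasure.boundedBy_apply]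
  exact le_iSup₂_of_le 1 one_pos
    (le_iInf₂ fun t hAt => le_iInf fun _ => iInf₂_le t hAt)

theorem hausdorffMeasure_eq_zero_iff_hausdorffContent_eq_zero (hs : 0 < s) :
    μH[s] A = 0 ↔ hausdorffContent s A = 0 := by
  refine ⟨fun h => le_zero_iff.1 (h ▸ hausdorffContent_le_hausdorffMeasure s A), fun h => ?_⟩
  simp only [Measure.hausdorffMeasure_apply, ENNReal.iSup_eq_zero]
  intro r hr
  refine le_zero_iff.1 (le_of_forall_gt fun ε hε => ?_)
  obtain ⟨t, hAt, hsum⟩ := hausdorffContent_lt_iff.1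
    (h.trans_lt (lt_min hε (ENNReal.rpow_pos_of_nonneg hr hs.le)))
  -- A cover of small total cost consists of sets of small diameter, as `s > 0`.
  have hdiam : ∀ n, ediam (t n) ≤ r := by
    intro n
    rcases (t n).eq_empty_or_nonempty with hn | hn
    · simp [hn]
    rw [← ENNReal.rpow_le_rpow_iff hs]
    calc ediam (t n) ^ s ≤ ⨆ _ : (t n).Nonempty, ediam (t n) ^ s :=
          le_iSup (fun _ => ediam (t n) ^ s) hn
      _ ≤ ∑' n, ⨆ _ : (t n).Nonempty, ediam (t n) ^ s := ENNReal.le_tsum n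
      _ ≤ r ^ s := (hsum.trans_le (min_le_right _ _)).le
  simp only [iInf_lt_iff]
  exact ⟨t, hAt, hdiam, hsum.trans_le (min_le_left _ _)⟩

end HausdorffMeasure

theorem le_measure_limsup_atTop {α : Type*} [MeasurableSpace α] {μ : Measure α}
    [IsFiniteMeasure μ] {V : ℕ → Set α} (hV : ∀ n, NullMeasurableSet (V n) μ) {ε : ℝ≥0∞}
    (h : ∀ n, ε ≤ μ (V n)) : ε ≤ μ (limsup V atTop) := by
  have hanti : Antitone fun n => ⋃ i ≥ n, V i := fun m n hmn =>
    biUnion_subset_biUnion_left fun _ hi => hmn.trans hi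
  have hmeas : ∀ n, NullMeasurableSet (⋃ i ≥ n, V i) μ := fun n =>
    .biUnion (to_countable _) fun i _ => hV i
  rw [limsup_eq_iInf_iSup_of_nat]
  simp only [iInf_eq_iInter, iSup_eq_iUnion]
  rw [hanti.measure_iInter hmeas ⟨0, measure_ne_top _ _⟩]
  exact le_iInf fun n => (h n).trans (measure_mono (subset_biUnion_of_mem (u := V) (le_refl n)))

section Dimension

variable {X : Type*} [EMetricSpace X] [MeasurableSpace X] [BorelSpace X]

theorem exists_measure_pos_hausdorffMeasure_eq_zero_iff (μ : Measure X) [IsFiniteMeasure μ]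
    {s : ℝ} (hs : 0 < s) :
    (∃ A, MeasurableSet A ∧ 0 < μ A ∧ μH[s] A = 0) ↔
      ∃ k : ℕ, ∀ n : ℕ, ∃ V, (IsOpen V ∧ hausdorffContent s V < 2⁻¹ ^ n) ∧
        (k : ℝ≥0∞)⁻¹ < μ V := by
  constructor
  · rintro ⟨A, -, hpos, hnull⟩
    obtain ⟨k, hk⟩ := ENNReal.exists_inv_nat_lt hpos.ne'
    refine ⟨k, fun n => ?_⟩
    have hlt : hausdorffContent s A < 2⁻¹ ^ n := by
      rw [(hausdorffMeasure_eq_zero_iff_hausdorffContent_eq_zero hs).1 hnull]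
      exact ENNReal.pow_pos (by simp) n
    obtain ⟨V, hVopen, hAV, hV⟩ := exists_isOpen_superset_hausdorffContent_lt hlt
    exact ⟨V, ⟨hVopen, hV⟩, hk.trans_le (measure_mono hAV)⟩
  · rintro ⟨k, h⟩
    choose V hV hk using h
    have hmeas : ∀ n, MeasurableSet (V n) := fun n => (hV n).1.measurableSet
    refine ⟨limsup V atTop, .measurableSet_limsup hmeas, ?_, ?_⟩
    · exact (ENNReal.inv_pos.2 (ENNReal.natCast_ne_top k)).trans_le
        (le_measure_limsup_atTop (fun n => (hmeas n).nullMeasurableSet) fun n => (hk n).le)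
    · rw [hausdorffMeasure_eq_zero_iff_hausdorffContent_eq_zero hs]
      refine measure_limsup_atTop_eq_zero (ne_top_of_le_ne_top ?_
        (ENNReal.tsum_le_tsum fun n => (hV n).2.le))
      simp [ENNReal.tsum_geometric]

theorem dimMeas_lt_iff (μ : Measure X) {D : Set ℝ≥0} (hD : Dense D) {t : ℝ≥0∞} :
    dimMeas μ < t ↔ ∃ s ∈ D, (0 < s ∧ s < t) ∧
      ∃ A, MeasurableSet A ∧ 0 < μ A ∧ μH[s] A = 0 := by
  constructor
  · intro h
    simp only [dimMeas, iInf_lt_iff] at h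
    obtain ⟨A, hA, hpos, hdim⟩ := h
    obtain ⟨t', hAt', ht'⟩ := ENNReal.lt_iff_exists_nnreal_btwn.1 hdim
    lift dimH A to ℝ≥0 using hAt'.ne_top with d hd
    obtain ⟨s, hsD, hds, hst'⟩ := hD.exists_between (ENNReal.coe_lt_coe.1 hAt')
    refine ⟨s, hsD, ⟨zero_le.trans_lt hds, (ENNReal.coe_lt_coe.2 hst').trans ht'⟩, A, hA, hpos,
      hausdorffMeasure_of_dimH_lt (hd ▸ ENNReal.coe_lt_coe.2 hds)⟩
  · rintro ⟨s, -, ⟨-, hst⟩, A, hA, hpos, hnull⟩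
    calc dimMeas μ ≤ dimH A := iInf₂_le_of_le A hA (iInf_le _ hpos)
      _ ≤ s := dimH_le_of_hausdorffMeasure_ne_top (hnull ▸ ENNReal.zero_ne_top)
      _ < t := hst

end Dimension

theorem isOpen_setOfPred_lt_measure {Ω : Type*} [TopologicalSpace Ω] [HasOuterApproxClosed Ω]
    [MeasurableSpace Ω] [OpensMeasurableSpace Ω] {V : Set Ω} (hV : IsOpen V) (c : ℝ≥0∞) :
    IsOpen {μ : FiniteMeasure Ω | c < (μ : Measure Ω) V} := by
  have hF : IsClosed Vᶜ := hV.isClosed_compl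
  -- For finite `μ`, `c < μ V` means `c + μ Vᶜ < μ univ`; approximate `Vᶜ` from above.
  have hlt_iff (μ : FiniteMeasure Ω) : c < (μ : Measure Ω) V ↔
      ∃ n, c + ∫⁻ x, hF.apprSeq n x ∂(μ : Measure Ω) < μ.mass := by
    rw [← ENNReal.add_lt_add_iff_right (measure_ne_top (μ : Measure Ω) Vᶜ),
      measure_add_measure_compl hV.measurableSet, ← FiniteMeasure.ennreal_mass]
    refine ⟨fun h => ?_, fun ⟨n, hn⟩ => lt_of_le_of_lt ?_ hn⟩
    · exact (((HasOuterApproxClosed.tendsto_lintegral_apprSeq hF (μ : Measure Ω)).const_add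
        c).eventually_lt_const h).exists
    · exact add_le_add_right (HasOuterApproxClosed.measure_le_lintegral hF (μ : Measure Ω) n) c
  simp only [hlt_iff, ofPred_exists]
  exact isOpen_iUnion fun n => isOpen_lt
    (continuous_const.add
      (FiniteMeasure.continuous_iff_forall_continuous_lintegral.1 continuous_id (hF.apprSeq n)))
    (ENNReal.continuous_coe.comp FiniteMeasure.continuous_mass)

section Measurability

variable (X : Type*) [EMetricSpace X] [MeasurableSpace X] [BorelSpace X]

theorem measurableSet_setOfPred_exists_hausdorffMeasure_eq_zero {s : ℝ} (hs : 0 < s) :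
    MeasurableSet[borel (FiniteMeasure X)] {μ : FiniteMeasure X |
      ∃ A, MeasurableSet A ∧ 0 < (μ : Measure X) A ∧ μH[s] A = 0} := by
  borelize (FiniteMeasure X)
  have hset : {μ : FiniteMeasure X |
        ∃ A, MeasurableSet A ∧ 0 < (μ : Measure X) A ∧ μH[s] A = 0} =
      ⋃ k : ℕ, ⋂ n : ℕ, ⋃ (V : Set X) (_ : IsOpen V ∧ hausdorffContent s V < 2⁻¹ ^ n),
        {μ : FiniteMeasure X | (k : ℝ≥0∞)⁻¹ < (μ : Measure X) V} := by
    ext μ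
    simp only [mem_ofPred_eq, mem_iUnion, mem_iInter, exists_prop,
      exists_measure_pos_hausdorffMeasure_eq_zero_iff (μ : Measure X) hs]
  rw [hset]
  exact .iUnion fun k => .iInter fun n => IsOpen.measurableSet <|
    isOpen_iUnion fun V => isOpen_iUnion fun hV => isOpen_setOfPred_lt_measure hV.1 _

theorem stmt15_general :
    Measurable[borel (FiniteMeasure X)] fun μ : FiniteMeasure X => dimMeas (μ : Measure X) := by
  borelize (FiniteMeasure X)
  obtain ⟨D, hDcount, hD⟩ := TopologicalSpace.exists_countable_dense ℝ≥0
  refine measurable_of_Iio fun t => ?_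
  have hset : (fun μ : FiniteMeasure X => dimMeas (μ : Measure X)) ⁻¹' Iio t =
      ⋃ s ∈ D, ⋃ _ : 0 < s ∧ s < t, {μ : FiniteMeasure X |
        ∃ A, MeasurableSet A ∧ 0 < (μ : Measure X) A ∧ μH[s] A = 0} := by
    ext μ
    simp only [mem_preimage, mem_Iio, mem_iUnion, mem_ofPred_eq, exists_prop,
      dimMeas_lt_iff (μ : Measure X) hD]
  rw [hset]
  exact .biUnion hDcount fun s _ => .iUnion fun hs => by
    simpa only [BorelSpace.measurable_eq (α := FiniteMeasure X)] using
      measurableSet_setOfPred_exists_hausdorffMeasure_eq_zero X (NNReal.coe_pos.2 hs.1)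

end Measurability

/-- With respect to the Borel σ-algebra of the weak* topology on the space of Borel
probability measures on a compact metric space, the map `μ ↦ dim μ` is measurable. -/
theorem stmt15 (X : Type*) [MetricSpace X] [CompactSpace X]
    [MeasurableSpace X] [BorelSpace X] :
    @Measurable (ProbabilityMeasure X) ℝ≥0∞ (borel (ProbabilityMeasure X)) _
      (fun μ => dimMeas (μ : Measure X)) :=
  ((stmt15_general X).comp ProbabilityMeasure.toFiniteMeasure_continuous.borel_measurable :)
end
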